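/- arXiv:2011.08842 — 8 statements merged into one kernel-verified Lean document; each statement's English description precedes it below -/
import Mathlib

section
/- Fix n ≥ 1. The assignment sending a monic degree-n polynomial f ∈ ℤ[x] to the pair (ℤ[x]/(f), x mod f) induces a bijection from the set of monic degree-n polynomials in ℤ[x], modulo the equivalence relation identifying f(x) with f(x+m) for every m ∈ ℤ, onto the set of isomorphism classes of monogenised n-ic rings. -/
open Polynomial

/-!
Both halves rest on the universal property of `ℤ[x]`: a ring homomorphism out of it is determined
by the image of `x`.

An isomorphism `ℤ[x]/(f) ≃ ℤ[x]/(g)` sending `x` to `x + m` sends the class of `p(x)` to that of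
`p(x + m)`, so `g` divides `f(x + m)`; both are monic of degree `n`, hence equal. Conversely the
automorphism `x ↦ x + m` of `ℤ[x]` carries `(f)` to `(f(x + m))`.

For surjectivity, given `(R, α)`, take for `f` the characteristic polynomial of multiplication by
`α`. By Cayley-Hamilton `f(α) = 0`, so evaluation at `α` induces a surjection `ℤ[x]/(f) → R` between
free `ℤ`-modules of the same finite rank `n`, and such a surjection is bijective.
-/

/-- A ring homomorphism `ℤ[x]/(f) → ℤ[x]/(g)` with `x ↦ x + m` acts on classes by substitution. -/
lemma map_mk_eq_mk_comp {f g : ℤ[X]} {m : ℤ}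
    (e : (ℤ[X] ⧸ Ideal.span {f}) →+* (ℤ[X] ⧸ Ideal.span {g}))
    (he : e (Ideal.Quotient.mk (Ideal.span {f}) X) =
      Ideal.Quotient.mk (Ideal.span {g}) X + (m : ℤ[X] ⧸ Ideal.span {g})) (p : ℤ[X]) :
    e (Ideal.Quotient.mk (Ideal.span {f}) p) =
      Ideal.Quotient.mk (Ideal.span {g}) (p.comp (X + C m)) := by
  have h : e.comp (Ideal.Quotient.mk (Ideal.span {f})) =
      (Ideal.Quotient.mk (Ideal.span {g})).comp (compRingHom (X + C m)) := by
    apply Polynomial.ringHom_ext'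
    · exact RingHom.ext_int _ _
    · simp [he]
  exact RingHom.congr_fun h p

lemma eq_comp_of_equiv {f g : ℤ[X]} (hf : f.Monic) (hg : g.Monic)
    (hdeg : f.natDegree = g.natDegree) {m : ℤ}
    (e : (ℤ[X] ⧸ Ideal.span {f}) →+* (ℤ[X] ⧸ Ideal.span {g}))
    (he : e (Ideal.Quotient.mk (Ideal.span {f}) X) =
      Ideal.Quotient.mk (Ideal.span {g}) X + (m : ℤ[X] ⧸ Ideal.span {g})) :
    g = f.comp (X + C m) := by
  have h := map_mk_eq_mk_comp e he f
  rw [Ideal.Quotient.eq_zero_iff_mem.mpr (Ideal.mem_span_singleton_self f), map_zero, eq_comm,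
    Ideal.Quotient.eq_zero_iff_mem, Ideal.mem_span_singleton] at h
  refine (eq_of_monic_of_dvd_of_natDegree_le hg (hf.comp_X_add_C m) h ?_).symm
  rw [natDegree_comp, natDegree_X_add_C, mul_one, hdeg]

lemma exists_equiv_comp (f : ℤ[X]) (m : ℤ) :
    ∃ e : (ℤ[X] ⧸ Ideal.span {f}) ≃+* (ℤ[X] ⧸ Ideal.span {f.comp (X + C m)}),
      e (Ideal.Quotient.mk (Ideal.span {f}) X) =
        Ideal.Quotient.mk (Ideal.span {f.comp (X + C m)}) X +
          (m : ℤ[X] ⧸ Ideal.span {f.comp (X + C m)}) := by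
  refine ⟨Ideal.quotientEquiv _ _ (algEquivAevalXAddC m).toRingEquiv ?_, ?_⟩
  · rw [Ideal.map_span, Set.image_singleton]
    simp [comp_eq_aeval]
  · simp

/-- A monogenic ring that is free of finite rank over `ℤ` is the quotient of `ℤ[x]` by the
characteristic polynomial of multiplication by the generator. -/
lemma exists_equiv_of_adjoin_eq_top {R : Type*} [CommRing R] [Module.Free ℤ R] [Module.Finite ℤ R]
    (α : R) (hα : Algebra.adjoin ℤ {α} = ⊤) :
    ∃ f : ℤ[X], f.Monic ∧ f.natDegree = Module.finrank ℤ R ∧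
      ∃ e : (ℤ[X] ⧸ Ideal.span {f}) ≃+* R, e (Ideal.Quotient.mk (Ideal.span {f}) X) = α := by
  set f := (Algebra.lmul ℤ R α).charpoly
  have hmonic : f.Monic := LinearMap.charpoly_monic _
  have hdeg : f.natDegree = Module.finrank ℤ R := LinearMap.charpoly_natDegree _
  have hroot : aeval α f = 0 := by
    apply Algebra.lmul_injective (R := ℤ)
    rw [← aeval_algHom_apply, LinearMap.aeval_self_charpoly, map_zero]
  let φ : (ℤ[X] ⧸ Ideal.span {f}) →ₐ[ℤ] R := Ideal.Quotient.liftₐ _ (aeval α) (by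
    intro a ha
    obtain ⟨b, rfl⟩ := Ideal.mem_span_singleton.mp ha
    rw [map_mul, hroot, zero_mul])
  have hφ (p : ℤ[X]) : φ (Ideal.Quotient.mk _ p) = aeval α p := rfl
  have hsurj : Function.Surjective φ := by
    intro r
    have hr : r ∈ Algebra.adjoin ℤ {α} := hα ▸ Algebra.mem_top
    rw [Algebra.adjoin_singleton_eq_range_aeval] at hr
    obtain ⟨p, rfl⟩ := hr
    exact ⟨Ideal.Quotient.mk _ p, rfl⟩
  have : Module.Free ℤ (ℤ[X] ⧸ Ideal.span {f}) := hmonic.free_quotient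
  have : Module.Finite ℤ (ℤ[X] ⧸ Ideal.span {f}) := hmonic.finite_quotient
  have hrank : Module.finrank ℤ (ℤ[X] ⧸ Ideal.span {f}) = Module.finrank ℤ R := by
    rw [← hdeg]
    exact finrank_quotient_span_eq_natDegree' hmonic
  let ψ := LinearEquiv.ofFinrankEq _ _ hrank
  -- A surjective endomorphism of a finitely generated module is injective.
  have hinj : Function.Injective φ := by
    have h := OrzechProperty.injective_of_surjective_endomorphism
      (ψ.symm.toLinearMap ∘ₗ φ.toLinearMap) (ψ.symm.surjective.comp hsurj)
    exact Function.Injective.of_comp h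
  refine ⟨f, hmonic, hdeg, RingEquiv.ofBijective φ ⟨hinj, hsurj⟩, ?_⟩
  exact (hφ X).trans (aeval_X α)

/-- **Parametrisation of monogenised `n`-ic rings by monic integer polynomials.**
The assignment `f ↦ (ℤ[x]/(f), x)` induces a bijection from monic degree-`n` integer
polynomials, modulo the identification of `f(x)` with `f(x+m)` for `m ∈ ℤ`, onto
isomorphism classes of monogenised `n`-ic rings (pairs `(R, α)` with `R` a commutative
ring that is free of rank `n` as a `ℤ`-module and `R = ℤ[α]`, up to ring isomorphisms
sending `α` to `α' + m`).  This is expressed as: (injectivity) two monic degree-`n`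
polynomials yield isomorphic monogenised rings iff they differ by a shift `x ↦ x + m`;
(surjectivity) every monogenised `n`-ic ring is isomorphic to one arising from a monic
degree-`n` polynomial. -/
theorem monogenised_ring_parametrisation (n : ℕ) (hn : 1 ≤ n) :
    (∀ f g : Polynomial ℤ, f.Monic → g.Monic → f.natDegree = n → g.natDegree = n →
      ((∃ e : (Polynomial ℤ ⧸ Ideal.span {f}) ≃+* (Polynomial ℤ ⧸ Ideal.span {g}),
          ∃ m : ℤ, e (Ideal.Quotient.mk (Ideal.span {f}) X) =
            Ideal.Quotient.mk (Ideal.span {g}) X + (m : Polynomial ℤ ⧸ Ideal.span {g})) ↔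
        (∃ m : ℤ, g = f.comp (X + C m)))) ∧
    (∀ (R : Type) [CommRing R], ∀ α : R,
      Module.Free ℤ R → Module.finrank ℤ R = n → Algebra.adjoin ℤ {α} = ⊤ →
      ∃ f : Polynomial ℤ, f.Monic ∧ f.natDegree = n ∧
        ∃ e : (Polynomial ℤ ⧸ Ideal.span {f}) ≃+* R,
          ∃ m : ℤ, e (Ideal.Quotient.mk (Ideal.span {f}) X) = α + (m : R)) := by
  refine ⟨fun f g hf hg hfn hgn => ⟨?_, ?_⟩, fun R _ α hfree hrank hα => ?_⟩
  · rintro ⟨e, m, he⟩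
    exact ⟨m, eq_comp_of_equiv hf hg (hfn.trans hgn.symm) e.toRingHom he⟩
  · rintro ⟨m, rfl⟩
    obtain ⟨e, he⟩ := exists_equiv_comp f m
    exact ⟨e, m, he⟩
  -- `finrank` is `0` for modules of infinite rank, so `1 ≤ n` forces `R` to be finitely generated.
  · have : Module.Finite ℤ R := Module.finite_of_finrank_pos (by omega)
    obtain ⟨f, hf, hdeg, e, he⟩ := exists_equiv_of_adjoin_eq_top α hα
    exact ⟨f, hf, hdeg.trans hrank, e, 0, by simpa using he⟩
end

section
/- Let T be a commutative ring in which 2 = 0, let n be a positive even integer, and let A ∈ Mₙ(T) be the anti-diagonal matrix with A_{i, n+1−i} = 1 for all i and all other entries 0. Then for every symmetric matrix B ∈ Mₙ(T), all odd-degree coefficients of the polynomial det(x·A − B) ∈ T[x] vanish; that is, det(x·A − B) lies in the subring T[x²]. -/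
open Polynomial

/-!
Since `2 = 0`, a polynomial has no odd-degree terms as soon as its derivative vanishes, so it
suffices to show that `det M` has zero derivative, where `M = x A - B`. The matrix `M` is symmetric,
and its diagonal entries are constants because `n` is even. Expanding the determinant by the Leibniz
formula (signs do not matter) and differentiating each product, `(det M)'` is the sum over pairs
`(σ, i)` of `(∏ j ≠ i, M (σ j) j) * (M (σ i) i)'`. By symmetry of `M`, the involution
`(σ, i) ↦ (σ⁻¹, σ i)` preserves the summand, so its two-element orbits cancel in characteristic two,
and at a fixed pair `σ i = i`, so that the factor `(M i i)'` is zero.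
-/

/-- If `2 = 0`, the determinant of a symmetric polynomial matrix whose diagonal entries have zero
derivative has zero derivative. -/
theorem derivative_det_eq_zero_of_isSymm {R ι : Type*} [CommRing R] [Fintype ι] [DecidableEq ι]
    (h2 : (2 : R) = 0) (M : Matrix ι ι R[X]) (hM : M.IsSymm)
    (hd : ∀ i, derivative (M i i) = 0) : derivative M.det = 0 := by
  have h2' : (2 : R[X]) = 0 := by
    rw [← map_ofNat (C : R →+* R[X]) 2, h2, C_0]
  have hneg : (-1 : R[X]) = 1 := by linear_combination -h2'
  have hdet : M.det = ∑ σ : Equiv.Perm ι, ∏ i, M (σ i) i := by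
    rw [Matrix.det_apply']
    refine Finset.sum_congr rfl fun σ _ => ?_
    rcases Int.units_eq_one_or (Equiv.Perm.sign σ) with h | h <;> simp [h, hneg]
  rw [hdet, derivative_sum]
  simp_rw [derivative_prod_finset]
  rw [← Finset.sum_product']
  refine Finset.sum_involution (fun p _ => (p.1⁻¹, p.1 p.2)) ?_ ?_ ?_ ?_
  · rintro ⟨σ, i⟩ -
    have hprod : ∏ j ∈ Finset.univ.erase (σ i), M (σ⁻¹ j) j
        = ∏ j ∈ Finset.univ.erase i, M (σ j) j := by
      symm
      refine Finset.prod_equiv σ (by simp) fun j _ => ?_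
      simpa using hM.apply j (σ j)
    have hentry : M (σ⁻¹ (σ i)) (σ i) = M (σ i) i := by
      simpa using hM.apply (σ i) i
    simp only [hprod, hentry]
    rw [← two_mul, h2', zero_mul]
  · rintro ⟨σ, i⟩ - hne heq
    have hi : σ i = i := congrArg Prod.snd heq
    exact hne (by simp [hi, hd])
  · simp
  · simp

/-- **In characteristic 2, resolvents of pairs with hyperbolic first component are even
polynomials.** Let `T` be a commutative ring with `2 = 0`, let `n` be a positive even
integer, and let `A` be the anti-diagonal `n × n` matrix with `1`'s on the anti-diagonal.
Then for every symmetric `B ∈ Mₙ(T)`, all odd-degree coefficients of `det (x • A - B)`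
vanish, i.e. `det (x • A - B) ∈ T[x²]`. -/
theorem det_antidiagonal_sub_symm_even_coeffs
    (T : Type) [CommRing T] (h2 : (2 : T) = 0)
    (n : ℕ) (hn : 0 < n) (hn_even : Even n)
    (A B : Matrix (Fin n) (Fin n) T)
    (hA : ∀ i j : Fin n, A i j = if (i : ℕ) + (j : ℕ) + 1 = n then 1 else 0)
    (hB : B.IsSymm) :
    ∀ k : ℕ, Odd k →
      (((X : T[X]) • A.map (fun a => C a) - B.map (fun a => C a)).det).coeff k = 0 := by
  intro k hk
  obtain ⟨m, rfl⟩ := hk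
  have hder : derivative
      (((X : T[X]) • A.map (fun a => C a) - B.map (fun a => C a)).det) = 0 := by
    refine derivative_det_eq_zero_of_isSymm h2 _ ?_ ?_
    · ext1 i j
      simp [hA, hB.apply i j, add_comm (j : ℕ) (i : ℕ)]
    · intro i
      -- The anti-diagonal misses the diagonal: `2 * i + 1 = n` is impossible for even `n`.
      have hne : (i : ℕ) + (i : ℕ) + 1 ≠ n := by
        obtain ⟨r, rfl⟩ := hn_even
        omega
      simp [hA, hne]
  have hcoeff := congrArg (fun p => coeff p (2 * m)) hder
  simp only [coeff_derivative, coeff_zero] at hcoeff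
  push_cast at hcoeff
  linear_combination hcoeff - (coeff _ (2 * m + 1)) * (m : T) * h2
end

section
/- Let p be a prime, n ≥ 1, and let f ∈ ℤ_p[x] be a monic polynomial of degree n with nonzero discriminant. Set R = ℤ_p[x]/(f). Then the groups R^×/(R^×)² and R^×[2] = {u ∈ R^× : u² = 1} are finite, and |R^×/(R^×)²| = |R^×[2]| if p ≠ 2, while |R^×/(R^×)²| = 2ⁿ · |R^×[2]| if p = 2. -/
/-!
The ring `R = ℤ_p[x]/(f)` is free of rank `n` over `ℤ_p`, hence `p`-adically complete.
Let `U = 1 + 2pR ⊆ R^×`. It has finite index because `R/2pR` is finite, and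
it contains no element of order `2`: if `(1 + 2pa)² = 1` then `4p·a(1 + pa) = 0`, where `1 + pa` is
a unit and `4p` is a nonzerodivisor (`eq_one_of_mem_oneUnits_of_sq_eq_one`).

For any commutative group `G` with a finite-index subgroup `U` free of `2`-torsion one has
`[G : G²] = [U : U²] · |G[2]|` (`index_range_sq_eq`). Hensel's lemma gives `U² = 1 + 4pR`, so
`[U : U²] = |R/2R|` (`relIndex_map_sq_oneUnits`). Finally `|R/2R|` is `1` if `p` is odd, since `2`
is then a unit, and `2ⁿ` if `p = 2`. Taking `U` modulo `2p` treats both cases at once.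
-/

open Polynomial

/-- The subgroup of squares of a commutative group. -/
def squaresSubgroup (G : Type) [CommGroup G] : Subgroup G := (powMonoidHom 2 : G →* G).range

/-- Comparison of `G` with a finite-index subgroup `U` without `2`-torsion. Both sides come from
computing the index of `U²` in `G` in two ways: through `U`, and through `G²`, where
`[G² : U²] = [G : U · G[2]]` and `[U · G[2] : U] = |G[2]|`. -/
theorem index_range_sq_eq {G : Type*} [CommGroup G] (U : Subgroup G)
    [U.FiniteIndex] (hU : ∀ u ∈ U, u ^ 2 = 1 → u = 1) :
    Finite (powMonoidHom 2 : G →* G).ker ∧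
    (powMonoidHom 2 : G →* G).range.index =
      (U.map (powMonoidHom 2 : G →* G)).relIndex U * Nat.card (powMonoidHom 2 : G →* G).ker := by
  set s : G →* G := powMonoidHom 2
  have hinf : U ⊓ s.ker = ⊥ := by
    rw [eq_bot_iff]
    rintro u ⟨h1, h2⟩
    exact hU u h1 h2
  have hker : U.relIndex s.ker = Nat.card s.ker := by
    rw [← Subgroup.inf_relIndex_right, hinf, Subgroup.relIndex_bot_left]
  have hle : U.map s ≤ U := by
    rintro _ ⟨u, hu, rfl⟩
    exact U.pow_mem hu 2
  have h1 := Subgroup.relIndex_mul_index hle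
  have h2 := Subgroup.relIndex_mul_index (le_sup_left : U ≤ U ⊔ s.ker)
  rw [Subgroup.relIndex_sup_left, hker] at h2
  have h3 := Subgroup.index_map (H := U) s
  have h0 : U.index ≠ 0 := Subgroup.FiniteIndex.index_ne_zero
  rw [← h2] at h0
  refine ⟨Nat.finite_of_card_ne_zero (left_ne_zero_of_mul h0), ?_⟩
  have h4 := right_ne_zero_of_mul h0
  apply Nat.eq_of_mul_eq_mul_left (Nat.pos_of_ne_zero h4)
  rw [← h3, ← h1, ← h2]
  ring

section ring
variable {R : Type*} [CommRing R]

/-- The congruence subgroup of units `u ≡ 1` modulo `m`. -/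
def oneUnits (m : R) : Subgroup Rˣ :=
  (Units.map (Ideal.Quotient.mk (Ideal.span {m})).toMonoidHom).ker

theorem mem_oneUnits {m : R} {u : Rˣ} : u ∈ oneUnits m ↔ ∃ a, (u : R) = 1 + m * a := by
  rw [oneUnits, MonoidHom.mem_ker, Units.ext_iff]
  change Ideal.Quotient.mk _ (u : R) = 1 ↔ _
  rw [← map_one (Ideal.Quotient.mk (Ideal.span {m})), Ideal.Quotient.eq, Ideal.mem_span_singleton]
  exact exists_congr fun a => sub_eq_iff_eq_add'

theorem finiteIndex_oneUnits (m : R) [Finite (R ⧸ Ideal.span {m})] : (oneUnits m).FiniteIndex :=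
  inferInstanceAs (MonoidHom.ker _).FiniteIndex

/-- The index of `U²` in `U = 1 + 2πR`. The map `1 + 2πa ↦ a mod 2` is a surjective homomorphism
`U → R/2R`, and its kernel `1 + 4πR` is exactly `U²`: a root `z ∈ πR` of `z² + z = πb`, which
exists by Hensel's lemma, gives `(1 + 2z)² = 1 + 4πb`. -/
theorem relIndex_map_sq_oneUnits (π : R) (hπ : IsLeftRegular (2 * π))
    [hH : HenselianRing R (Ideal.span {π})] :
    ((oneUnits (2 * π)).map (powMonoidHom 2)).relIndex (oneUnits (2 * π)) =
      Nat.card (R ⧸ Ideal.span {(2 : R)}) := by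
  -- `π` lies in the Jacobson radical.
  have hunit : ∀ a, IsUnit (1 + π * a) := fun a => by
    rw [add_comm]
    exact Ideal.mem_jacobson_bot.1 (hH.jac (Ideal.mem_span_singleton_self π)) a
  have hmem := fun u : oneUnits (2 * π) => mem_oneUnits.1 u.2
  -- `c u` is the unique `a` with `u = 1 + 2πa`; uniqueness is the regularity of `2π`.
  choose c hc using hmem
  let φ : oneUnits (2 * π) →* Multiplicative (R ⧸ Ideal.span {(2 : R)}) :=
    MonoidHom.mk' (fun u => Multiplicative.ofAdd (Ideal.Quotient.mk _ (c u))) fun u v => by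
      rw [← ofAdd_add, ← map_add]
      congr 1
      rw [Ideal.Quotient.eq, Ideal.mem_span_singleton]
      refine ⟨π * c u * c v, ?_⟩
      apply hπ
      have := hc (u * v)
      rw [Subgroup.coe_mul, Units.val_mul, hc u, hc v] at this
      linear_combination -this
  have hsurj : Function.Surjective φ := by
    intro x
    obtain ⟨a, ha⟩ := Ideal.Quotient.mk_surjective (Multiplicative.toAdd x)
    obtain ⟨u, hu⟩ := hunit (2 * a)
    refine ⟨⟨u, mem_oneUnits.2 ⟨a, by rw [hu]; ring⟩⟩, ?_⟩
    apply Multiplicative.toAdd.injective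
    rw [← ha]
    change Ideal.Quotient.mk _ (c _) = _
    congr 1
    apply hπ
    have := hc ⟨u, mem_oneUnits.2 ⟨a, by rw [hu]; ring⟩⟩
    simp only [hu] at this
    linear_combination -this
  have hker : φ.ker = ((oneUnits (2 * π)).map (powMonoidHom 2)).subgroupOf (oneUnits (2 * π)) := by
    ext u
    rw [MonoidHom.mem_ker, Subgroup.mem_subgroupOf]
    have h1 : φ u = 1 ↔ ∃ b, c u = 2 * b := by
      change Ideal.Quotient.mk _ (c u) = 0 ↔ _
      rw [Ideal.Quotient.eq_zero_iff_mem, Ideal.mem_span_singleton]; rfl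
    rw [h1]
    constructor
    · rintro ⟨b, hb⟩
      obtain ⟨z, hz, hz0⟩ := hH.is_henselian (X ^ 2 + X - C (π * b))
        (by monicity!) 0
        (by simpa using Ideal.mul_mem_right b _ (Ideal.mem_span_singleton_self π))
        (by simp)
      obtain ⟨a, ha⟩ := Ideal.mem_span_singleton.1 hz0
      rw [sub_zero] at ha
      obtain ⟨v, hv⟩ := hunit (2 * a)
      refine ⟨v, mem_oneUnits.2 ⟨a, by rw [hv]; ring⟩, ?_⟩
      ext
      rw [powMonoidHom_apply, Units.val_pow_eq_pow_val, hv, hc u, hb]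
      simp only [IsRoot.def, eval_sub, eval_add, eval_pow, eval_X, eval_C, ha] at hz
      linear_combination 4 * hz
    · rintro ⟨v, hv, hvu⟩
      obtain ⟨a, ha⟩ := mem_oneUnits.1 hv
      refine ⟨a + π * a ^ 2, hπ ?_⟩
      have := hc u
      rw [← hvu, powMonoidHom_apply, Units.val_pow_eq_pow_val, ha] at this
      linear_combination -this
  rw [Subgroup.relIndex, ← hker, Subgroup.index_ker, MonoidHom.range_eq_top.2 hsurj,
    Subgroup.card_top]
  rfl

theorem eq_one_of_mem_oneUnits_of_sq_eq_one (π : R) (hπ : IsLeftRegular (2 * π))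
    (hj : Ideal.span {π} ≤ Ideal.jacobson ⊥)
    (u : Rˣ) (hu : u ∈ oneUnits (2 * π)) (h : u ^ 2 = 1) : u = 1 := by
  obtain ⟨a, ha⟩ := mem_oneUnits.1 hu
  have hunit : IsUnit (1 + π * a) := by
    rw [add_comm]
    exact Ideal.mem_jacobson_bot.1 (hj (Ideal.mem_span_singleton_self π)) a
  have h1 : ((u ^ 2 : Rˣ) : R) = 1 := by rw [h, Units.val_one]
  rw [Units.val_pow_eq_pow_val, ha] at h1
  have h2 : 2 * (a * (1 + π * a)) = 0 := hπ (by linear_combination h1)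
  have h3 : a * (1 + π * a) = 0 := hπ (by linear_combination π * h2)
  ext
  rw [ha, (IsUnit.mul_left_eq_zero hunit).1 h3, mul_zero, add_zero, Units.val_one]

end ring

theorem isUnit_two_of_odd {p : ℕ} [Fact p.Prime] (h : Odd p) : IsUnit (2 : ℤ_[p]) := by
  have h2 := PadicInt.norm_natCast_eq_one_iff (p := p) (n := 2)
  rw [Nat.cast_ofNat] at h2
  exact PadicInt.isUnit_iff.2 (h2.2 h.coprime_two_right)

section padic
variable {p : ℕ} [Fact p.Prime] {n : ℕ} {R : Type*} [CommRing R] [Algebra ℤ_[p] R]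

theorem apply_natCast_mul (e : R ≃ₗ[ℤ_[p]] (Fin n → ℤ_[p]))
    (m : ℕ) (x : R) (i : Fin n) : e (m * x) i = m * e x i := by
  rw [← nsmul_eq_mul, map_nsmul, Pi.smul_apply, nsmul_eq_mul]

theorem natCast_dvd_iff (e : R ≃ₗ[ℤ_[p]] (Fin n → ℤ_[p]))
    (m : ℕ) (x : R) : (m : R) ∣ x ↔ ∀ i, (m : ℤ_[p]) ∣ e x i := by
  constructor
  · rintro ⟨y, rfl⟩ i
    exact ⟨e y i, apply_natCast_mul e m y i⟩
  · intro h
    choose c hc using h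
    refine ⟨e.symm c, e.injective ?_⟩
    ext1 i
    rw [apply_natCast_mul, e.apply_symm_apply, hc]

theorem isLeftRegular_natCast (e : R ≃ₗ[ℤ_[p]] (Fin n → ℤ_[p]))
    {m : ℕ} (hm : m ≠ 0) : IsLeftRegular (m : R) := by
  intro x y h
  apply e.injective
  ext1 i
  have h1 : e (m * x) i = e (m * y) i := by rw [show (m : R) * x = m * y from h]
  rw [apply_natCast_mul, apply_natCast_mul] at h1
  exact mul_left_cancel₀ (Nat.cast_ne_zero.2 hm) h1

theorem card_quotient_span_p_pow (e : R ≃ₗ[ℤ_[p]] (Fin n → ℤ_[p]))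
    (k : ℕ) : Nat.card (R ⧸ Ideal.span {((p ^ k : ℕ) : R)}) = (p ^ k) ^ n := by
  let ψ : R →+ (Fin n → ZMod (p ^ k)) :=
    (AddMonoidHom.pi fun i => (PadicInt.toZModPow (p := p) k).toAddMonoidHom.comp
      ((Pi.evalAddMonoidHom _ i).comp e.toLinearMap.toAddMonoidHom))
  have hψ : ∀ x i, ψ x i = PadicInt.toZModPow k (e x i) := fun _ _ => rfl
  have hs : Function.Surjective ψ := by
    intro y
    choose c hc using fun i => ZMod.ringHom_surjective (PadicInt.toZModPow (p := p) k) (y i)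
    refine ⟨e.symm c, ?_⟩
    ext1 i
    rw [hψ, e.apply_symm_apply, hc]
  have hk : ψ.ker = (Ideal.span {((p ^ k : ℕ) : R)}).toAddSubgroup := by
    ext x
    rw [AddMonoidHom.mem_ker, Submodule.mem_toAddSubgroup, Ideal.mem_span_singleton, natCast_dvd_iff e,
      funext_iff]
    refine forall_congr' fun i => ?_
    rw [hψ, Pi.zero_apply, ← RingHom.mem_ker, PadicInt.ker_toZModPow, Ideal.mem_span_singleton,
      Nat.cast_pow]
  have h1 := AddSubgroup.index_ker ψ
  rw [AddMonoidHom.range_eq_top.2 hs, AddSubgroup.card_top, hk] at h1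
  have h2 : Nat.card (Fin n → ZMod (p ^ k)) = (p ^ k) ^ n := by simp
  rw [← h2, ← h1]
  rfl

/-- Completeness of a finite free `ℤ_p`-algebra, deduced coordinatewise from that of `ℤ_p`. -/
theorem isAdicComplete_span_p (e : R ≃ₗ[ℤ_[p]] (Fin n → ℤ_[p])) :
    IsAdicComplete (Ideal.span {(p : R)}) R := by
  have key : ∀ (m : ℕ) (x y : R), x ≡ y [SMOD (Ideal.span {(p : R)} ^ m • ⊤ : Submodule R R)] ↔
      ∀ i, e x i ≡ e y i [SMOD (IsLocalRing.maximalIdeal ℤ_[p] ^ m • ⊤ : Submodule ℤ_[p] ℤ_[p])] := by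
    intro m x y
    simp only [SModEq.sub_mem, smul_eq_mul, Ideal.mul_top, PadicInt.maximalIdeal_eq_span_p,
      Ideal.span_singleton_pow, Ideal.mem_span_singleton]
    rw [← Nat.cast_pow, natCast_dvd_iff e]
    simp
  refine { haus' := fun x hx => ?_, prec' := fun f hf => ?_ }
  · apply e.injective
    ext1 i
    rw [map_zero]
    refine IsHausdorff.haus (I := IsLocalRing.maximalIdeal ℤ_[p]) inferInstance _ fun m => ?_
    simpa using (key m _ _).1 (hx m) i
  · have := fun i => IsPrecomplete.prec (I := IsLocalRing.maximalIdeal ℤ_[p]) inferInstance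
      (f := fun m => e (f m) i) fun {m k} hmk => (key m _ _).1 (hf hmk) i
    choose L hL using this
    refine ⟨e.symm L, fun m => (key m _ _).2 fun i => ?_⟩
    rw [e.apply_symm_apply]
    exact hL i m

/-- The index formula for any finite free `ℤ_p`-algebra. -/
theorem index_range_sq_of_equiv (e : R ≃ₗ[ℤ_[p]] (Fin n → ℤ_[p])) :
    Finite (powMonoidHom 2 : Rˣ →* Rˣ).ker ∧
    (powMonoidHom 2 : Rˣ →* Rˣ).range.index =
      Nat.card (R ⧸ Ideal.span {(2 : R)}) * Nat.card (powMonoidHom 2 : Rˣ →* Rˣ).ker := by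
  have hp : p.Prime := Fact.out
  have : IsAdicComplete (Ideal.span {(p : R)}) R := isAdicComplete_span_p e
  have hreg : IsLeftRegular (2 * (p : R)) := by
    have := isLeftRegular_natCast e (mul_ne_zero two_ne_zero hp.ne_zero)
    rwa [Nat.cast_mul, Nat.cast_ofNat] at this
  -- `R / 2pR` is a quotient of the finite ring `R / p²R`.
  have hdvd : (2 * p : R) ∣ ((p ^ 2 : ℕ) : R) := by
    rcases hp.eq_two_or_odd' with h | h
    · subst h
      norm_num
    · obtain ⟨x, hx⟩ := (isUnit_two_of_odd (p := p) h).map (algebraMap ℤ_[p] R)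
      rw [map_ofNat] at hx
      refine ⟨((x⁻¹ : Rˣ) : R) * p, ?_⟩
      rw [← hx]
      calc ((p ^ 2 : ℕ) : R) = ((x : R) * ((x⁻¹ : Rˣ) : R)) * (p * p) := by
            rw [Units.mul_inv, one_mul, Nat.cast_pow, sq]
        _ = _ := by ring
  have : Finite (R ⧸ Ideal.span {((p ^ 2 : ℕ) : R)}) := by
    apply Nat.finite_of_card_ne_zero
    rw [card_quotient_span_p_pow e]
    exact pow_ne_zero _ (pow_ne_zero _ hp.ne_zero)
  have : Finite (R ⧸ Ideal.span {(2 * p : R)}) :=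
    Finite.of_surjective _
      (Ideal.Quotient.factor_surjective (Ideal.span_singleton_le_span_singleton.2 hdvd))
  have := finiteIndex_oneUnits (2 * p : R)
  have h := index_range_sq_eq (oneUnits (2 * p : R))
    (eq_one_of_mem_oneUnits_of_sq_eq_one (p : R) hreg (IsAdicComplete.le_jacobson_bot _))
  rwa [relIndex_map_sq_oneUnits (p : R) hreg] at h

end padic

/-- **Total quantity lemma.** Let `p` be a prime, `f ∈ ℤ_p[x]` monic of degree `n ≥ 1`
with nonzero discriminant (formalised: `f` is squarefree over `ℚ_p`), and let
`R = ℤ_p[x]/(f)`.  Then `R^×/(R^×)²` and `R^×[2]` are finite, and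
`|R^×/(R^×)²| = |R^×[2]|` when `p ≠ 2`, while `|R^×/(R^×)²| = 2ⁿ·|R^×[2]|` when `p = 2`. -/
theorem padic_unit_square_index (p : ℕ) [Fact p.Prime] (n : ℕ) (hn : 1 ≤ n)
    (f : Polynomial ℤ_[p]) (hf : f.Monic) (hdeg : f.natDegree = n)
    (hdisc : Squarefree (f.map (algebraMap ℤ_[p] ℚ_[p]))) :
    Finite ((Polynomial ℤ_[p] ⧸ Ideal.span {f})ˣ ⧸
      squaresSubgroup (Polynomial ℤ_[p] ⧸ Ideal.span {f})ˣ) ∧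
    Finite {u : (Polynomial ℤ_[p] ⧸ Ideal.span {f})ˣ // u ^ 2 = 1} ∧
    (p ≠ 2 →
      Nat.card ((Polynomial ℤ_[p] ⧸ Ideal.span {f})ˣ ⧸
        squaresSubgroup (Polynomial ℤ_[p] ⧸ Ideal.span {f})ˣ) =
      Nat.card {u : (Polynomial ℤ_[p] ⧸ Ideal.span {f})ˣ // u ^ 2 = 1}) ∧
    (p = 2 →
      Nat.card ((Polynomial ℤ_[p] ⧸ Ideal.span {f})ˣ ⧸
        squaresSubgroup (Polynomial ℤ_[p] ⧸ Ideal.span {f})ˣ) =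
      2 ^ n * Nat.card {u : (Polynomial ℤ_[p] ⧸ Ideal.span {f})ˣ // u ^ 2 = 1}) := by
  let e : AdjoinRoot f ≃ₗ[ℤ_[p]] (Fin n → ℤ_[p]) :=
    (AdjoinRoot.powerBasis' hf).basis.equivFun.trans
      (LinearEquiv.funCongrLeft ℤ_[p] ℤ_[p]
        (finCongr ((AdjoinRoot.powerBasis'_dim hf).trans hdeg).symm))
  have hp : p.Prime := Fact.out
  obtain ⟨hfin, hidx⟩ := index_range_sq_of_equiv e
  change Finite {u : (Polynomial ℤ_[p] ⧸ Ideal.span {f})ˣ // u ^ 2 = 1} at hfin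
  change Nat.card ((Polynomial ℤ_[p] ⧸ Ideal.span {f})ˣ ⧸
        squaresSubgroup (Polynomial ℤ_[p] ⧸ Ideal.span {f})ˣ) =
    Nat.card (AdjoinRoot f ⧸ Ideal.span {(2 : AdjoinRoot f)}) *
      Nat.card {u : (Polynomial ℤ_[p] ⧸ Ideal.span {f})ˣ // u ^ 2 = 1} at hidx
  have hodd : p ≠ 2 → Nat.card (AdjoinRoot f ⧸ Ideal.span {(2 : AdjoinRoot f)}) = 1 := by
    intro h
    have hu := (isUnit_two_of_odd (hp.odd_of_ne_two h)).map (algebraMap ℤ_[p] (AdjoinRoot f))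
    rw [map_ofNat] at hu
    rw [Ideal.span_singleton_eq_top.2 hu]
    exact Nat.card_unique
  have htwo : p = 2 → Nat.card (AdjoinRoot f ⧸ Ideal.span {(2 : AdjoinRoot f)}) = 2 ^ n := by
    intro h
    have h1 := card_quotient_span_p_pow e 1
    rw [pow_one] at h1
    have h2 : ((p : ℕ) : AdjoinRoot f) = 2 :=
      (congrArg (Nat.cast : ℕ → AdjoinRoot f) h).trans Nat.cast_ofNat
    rw [h2] at h1
    rw [h1, h]
  have hcard : Nat.card (AdjoinRoot f ⧸ Ideal.span {(2 : AdjoinRoot f)}) ≠ 0 := by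
    by_cases h : p = 2
    · rw [htwo h]
      positivity
    · rw [hodd h]
      exact one_ne_zero
  refine ⟨?_, hfin, fun h => ?_, fun h => ?_⟩
  · apply Nat.finite_of_card_ne_zero
    rw [hidx]
    have : Nonempty {u : (Polynomial ℤ_[p] ⧸ Ideal.span {f})ˣ // u ^ 2 = 1} := ⟨⟨1, one_pow 2⟩⟩
    exact mul_ne_zero hcard Nat.card_pos.ne'
  · rw [hidx, hodd h, one_mul]
  · rw [hidx, htwo h]
end

section
/- Let p be a prime, n ≥ 1, and let f ∈ ℤ_p[x] be a monic polynomial of degree n with nonzero discriminant. Set R = ℤ_p[x]/(f), let N : R^× → ℤ_p^× be the norm map (sending u to the determinant of multiplication by u on R viewed as a free ℤ_p-module of rank n), and let N̄ : R^×/(R^×)² → ℤ_p^×/(ℤ_p^×)² be the induced map. Then |ker N̄| · |im N̄| = |R^×[2]| if p ≠ 2, and |ker N̄| · |im N̄| = 2ⁿ · |R^×[2]| if p = 2. Here ker N̄ is the subgroup of classes of units whose norm is a square in ℤ_p^×. -/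
/-!
Since `|ker N̄| · |im N̄| = |Rˣ/(Rˣ)²|`, the norm plays no role: the claim is
`[Rˣ : (Rˣ)²] = |R/2R| · |Rˣ[2]|`, together with `|R/2R| = 1` for odd `p` and `2ⁿ` for `p = 2`.

Let `U = 1 + 2pR`, a finite-index subgroup of `Rˣ`. From
`(1 + 2pa)² = 1 + 4p(a + pa²)` and Hensel's lemma in the `p`-adically complete ring `R`, squaring
is a bijection from `U` onto `1 + 4pR`, and `[1 + 2pR : 1 + 4pR] = |R/2R|`
(`relIndex_congrUnits`). The ratio of the orders of the cokernel and kernel of squaring is the same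
for `Rˣ` as for its finite-index subgroup `U` (`index_squares_of_subgroup`), which gives the
formula (`index_squares_of_henselian`).
-/

open Polynomial

/-! ### Index of the subgroup of squares -/

/-- Invariance of the Herbrand quotient of squaring under passage to a finite-index subgroup `U`,
in the case where squaring is injective on `U`. -/
lemma index_squares_of_subgroup {G : Type} [CommGroup G] (U : Subgroup G) (hU : U.index ≠ 0)
    (hinj : ∀ u ∈ U, u ^ 2 = 1 → u = 1) :
    (squaresSubgroup G).index =
      (U.map (powMonoidHom 2)).relIndex U * Nat.card {u : G // u ^ 2 = 1} := by
  set s : G →* G := powMonoidHom 2 with hs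
  have hle : U.map s ≤ U := by
    rintro _ ⟨u, hu, rfl⟩
    exact U.pow_mem hu 2
  have hbot : U ⊓ s.ker = ⊥ := by
    rw [eq_bot_iff]
    rintro u ⟨hu, hk⟩
    exact hinj u hu hk
  have h1 := Subgroup.index_map U s
  have h2 := Subgroup.relIndex_mul_index hle
  have h3 := Subgroup.relIndex_mul_index (le_sup_left : U ≤ U ⊔ s.ker)
  have h4 : U.relIndex (U ⊔ s.ker) = Nat.card {u : G // u ^ 2 = 1} := by
    rw [Subgroup.relIndex_sup_left, ← Subgroup.inf_relIndex_right, hbot,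
      Subgroup.relIndex_bot_left]
    rfl
  have hne : (U ⊔ s.ker).index ≠ 0 := by
    intro h
    rw [h, mul_zero] at h3
    exact hU h3.symm
  change s.range.index = _
  rw [h4] at h3
  apply Nat.eq_of_mul_eq_mul_left (Nat.pos_of_ne_zero hne)
  rw [← h1, ← h2, ← h3]
  ring

/-- The units congruent to `1` modulo `t`. -/
def congrUnits (S : Type) [CommRing S] (t : S) : Subgroup Sˣ :=
  (Units.map (Ideal.Quotient.mk (Ideal.span {t}) : S →* S ⧸ Ideal.span {t})).ker

lemma mem_congrUnits {S : Type} [CommRing S] {t : S} {u : Sˣ} :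
    u ∈ congrUnits S t ↔ ∃ a, (u : S) = 1 + t * a := by
  rw [congrUnits, MonoidHom.mem_ker, Units.ext_iff]
  change Ideal.Quotient.mk _ (u : S) = 1 ↔ _
  rw [← map_one (Ideal.Quotient.mk (Ideal.span {t})), Ideal.Quotient.eq,
    Ideal.mem_span_singleton']
  constructor
  · rintro ⟨a, ha⟩
    exact ⟨a, by linear_combination -ha⟩
  · rintro ⟨a, ha⟩
    exact ⟨a, by linear_combination -ha⟩

/-- If `d ∣ t`, `t` is regular and `1 + tS ⊆ Sˣ`, then `(1 + tS) / (1 + tdS) ≃ S / dS` via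
`1 + t a ↦ a`. -/
lemma relIndex_congrUnits {S : Type} [CommRing S] {t d : S} (hdt : d ∣ t)
    (ht : t ∈ nonZeroDivisors S) (hunit : ∀ a, IsUnit (1 + t * a)) :
    (congrUnits S (t * d)).relIndex (congrUnits S t) = Nat.card (S ⧸ Ideal.span {d}) := by
  choose c hc using fun u : congrUnits S t => mem_congrUnits.1 u.2
  have canc : ∀ {a b : S}, t * a = t * b → a = b := fun h =>
    mul_cancel_left_mem_nonZeroDivisors ht |>.1 h
  obtain ⟨e, rfl⟩ := hdt
  let φ : congrUnits S (d * e) →* Multiplicative (S ⧸ Ideal.span {d}) :=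
    MonoidHom.mk' (fun u => Multiplicative.ofAdd (Ideal.Quotient.mk _ (c u))) (by
      intro u v
      rw [← ofAdd_add, ← map_add]
      congr 1
      rw [Ideal.Quotient.eq, Ideal.mem_span_singleton]
      refine ⟨e * c u * c v, canc ?_⟩
      have := hc (u * v)
      rw [Subgroup.coe_mul, Units.val_mul, hc u, hc v] at this
      linear_combination -this)
  have hker : φ.ker = (congrUnits S (d * e * d)).subgroupOf (congrUnits S (d * e)) := by
    ext u
    rw [MonoidHom.mem_ker, Subgroup.mem_subgroupOf, mem_congrUnits, hc u]
    change Ideal.Quotient.mk _ (c u) = 0 ↔ _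
    rw [Ideal.Quotient.eq_zero_iff_mem, Ideal.mem_span_singleton]
    constructor
    · rintro ⟨a, ha⟩
      exact ⟨a, by rw [ha]; ring⟩
    · rintro ⟨a, ha⟩
      exact ⟨a, canc (by linear_combination ha)⟩
  have hsurj : Function.Surjective φ := by
    intro y
    obtain ⟨a, ha⟩ := Ideal.Quotient.mk_surjective (Multiplicative.toAdd y)
    obtain ⟨u, hu⟩ := hunit a
    let u' : congrUnits S (d * e) := ⟨u, mem_congrUnits.2 ⟨a, hu⟩⟩
    refine ⟨u', ?_⟩
    have : c u' = a := canc (by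
      have := hc u'
      change (u : S) = _ at this
      linear_combination hu - this)
    change Multiplicative.ofAdd (Ideal.Quotient.mk _ (c u')) = y
    rw [this, ha]
    rfl
  rw [Subgroup.relIndex, ← hker, Subgroup.index_ker, MonoidHom.range_eq_top.2 hsurj,
    Subgroup.card_top]
  rfl

/-- For a regular element `π` along which `S` is Henselian, squaring is a bijection
`1 + 2πS → 1 + 4πS`, which computes the index of the squares. -/
lemma index_squares_of_henselian {S : Type} [CommRing S] (π : S) (hπ : π ∈ nonZeroDivisors S)
    (h2 : (2 : S) ∈ nonZeroDivisors S) [H : HenselianRing S (Ideal.span {π})]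
    [Finite (S ⧸ Ideal.span {2 * π})] :
    (squaresSubgroup Sˣ).index =
      Nat.card (S ⧸ Ideal.span {(2 : S)}) * Nat.card {u : Sˣ // u ^ 2 = 1} := by
  have hunit : ∀ a, IsUnit (1 + π * a) := by
    intro a
    have := Ideal.mem_jacobson_bot.1 (H.jac (Ideal.mem_span_singleton_self π)) a
    rwa [add_comm] at this
  have h2π : 2 * π ∈ nonZeroDivisors S := mul_mem h2 hπ
  have hunit2 : ∀ a, IsUnit (1 + 2 * π * a) := fun a => by
    have := hunit (2 * a)
    convert this using 1
    ring
  have hU : (congrUnits S (2 * π)).index ≠ 0 := by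
    rw [congrUnits, Subgroup.index_ker]
    exact Nat.card_pos.ne'
  rw [index_squares_of_subgroup (congrUnits S (2 * π)) hU]
  · rw [← relIndex_congrUnits (t := 2 * π) (d := 2) ⟨π, rfl⟩ h2π hunit2]
    congr 2
    ext v
    constructor
    · rintro ⟨u, hu, rfl⟩
      obtain ⟨a, ha⟩ := mem_congrUnits.1 hu
      refine mem_congrUnits.2 ⟨a + π * a ^ 2, ?_⟩
      change ((u ^ 2 : Sˣ) : S) = _
      rw [Units.val_pow_eq_pow_val, ha]
      ring
    · intro hv
      obtain ⟨b, hb⟩ := mem_congrUnits.1 hv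
      -- The equation `a + π a² = b` becomes monic in `x = π a`.
      obtain ⟨x, hx, hxmem⟩ := H.is_henselian (X ^ 2 + X - C (π * b) : S[X])
        (by monicity!) 0
        (by
          simp only [eval_sub, eval_add, eval_pow, eval_X, eval_C]
          rw [Ideal.mem_span_singleton]
          exact ⟨-b, by ring⟩)
        (by simp)
      rw [sub_zero, Ideal.mem_span_singleton] at hxmem
      obtain ⟨a, rfl⟩ := hxmem
      simp only [IsRoot.def, eval_sub, eval_add, eval_pow, eval_X, eval_C] at hx
      obtain ⟨u, hu⟩ := hunit2 a
      refine ⟨u, mem_congrUnits.2 ⟨a, hu⟩, Units.ext ?_⟩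
      change ((u ^ 2 : Sˣ) : S) = _
      rw [Units.val_pow_eq_pow_val, hu, hb]
      linear_combination 4 * hx
  · intro u hu hu1
    obtain ⟨a, ha⟩ := mem_congrUnits.1 hu
    have hsq : (u : S) ^ 2 = 1 := by
      rw [← Units.val_pow_eq_pow_val, hu1, Units.val_one]
    rw [ha] at hsq
    have h0 : a * (1 + π * a) = 0 := by
      apply (mul_left_mem_nonZeroDivisors_eq_zero_iff h2π).1
      apply (mul_left_mem_nonZeroDivisors_eq_zero_iff h2).1
      linear_combination hsq
    have : a = 0 := (hunit a).mul_left_eq_zero.1 h0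
    apply Units.ext
    rw [ha, this, mul_zero, add_zero, Units.val_one]

/-! ### Finite free algebras over `ℤ_p` -/

/-- Over an `I`-adically precomplete ring, every finite module is `I`-adically precomplete, as a
quotient of some `Aⁿ`. -/
lemma isPrecomplete_of_finite {A M : Type} [CommRing A] [AddCommGroup M] [Module A M]
    [Module.Finite A M] (I : Ideal A) [IsPrecomplete I A] : IsPrecomplete I M := by
  obtain ⟨n, g, hg⟩ := Module.Finite.exists_fin' A M
  rw [← AdicCompletion.of_surjective_iff]
  intro y
  obtain ⟨z, rfl⟩ := AdicCompletion.map_surjective I hg y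
  choose w hw using fun i => AdicCompletion.of_surjective I A (AdicCompletion.piEquivFin I n z i)
  refine ⟨g w, ?_⟩
  rw [← AdicCompletion.map_of]
  congr 1
  apply (AdicCompletion.piEquivFin I n).injective
  funext i
  rw [← hw i, AdicCompletion.piEquivFin_apply]
  rfl

section Padic

variable (p : ℕ) [Fact p.Prime] (S : Type) [CommRing S] [Algebra ℤ_[p] S]

lemma map_maximalIdeal_padic : (IsLocalRing.maximalIdeal ℤ_[p]).map (algebraMap ℤ_[p] S) =
    Ideal.span {(p : S)} := by
  rw [PadicInt.maximalIdeal_eq_span_p, Ideal.map_span, Set.image_singleton, map_natCast]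

lemma henselianRing_padic [Module.Finite ℤ_[p] S] : HenselianRing S (Ideal.span {(p : S)}) := by
  rw [← map_maximalIdeal_padic]
  have h1 : IsPrecomplete (IsLocalRing.maximalIdeal ℤ_[p]) S := isPrecomplete_of_finite _
  have h2 : IsHausdorff (IsLocalRing.maximalIdeal ℤ_[p]) S := inferInstance
  have : IsAdicComplete ((IsLocalRing.maximalIdeal ℤ_[p]).map (algebraMap ℤ_[p] S)) S :=
    { toIsHausdorff := IsHausdorff.map_algebraMap_iff.2 h2
      toIsPrecomplete := IsPrecomplete.map_algebraMap_iff.2 h1 }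
  infer_instance

lemma isUnit_two_padic (hp : p ≠ 2) : IsUnit (2 : S) := by
  have h : IsUnit (2 : ℤ_[p]) := by
    rw [PadicInt.isUnit_iff]
    have := (PadicInt.norm_natCast_eq_one_iff (p := p) (n := 2)).2
      ((Nat.coprime_primes Fact.out Nat.prime_two).2 hp)
    simpa using this
  have h' := h.map (algebraMap ℤ_[p] S)
  rwa [map_ofNat] at h'

lemma card_quot_two_of_ne (hp : p ≠ 2) : Nat.card (S ⧸ Ideal.span {(2 : S)}) = 1 := by
  rw [Ideal.span_singleton_eq_top.2 (isUnit_two_padic p S hp)]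
  exact Nat.card_unique

lemma card_quot_padic [Module.Finite ℤ_[p] S] [Module.Free ℤ_[p] S] :
    Nat.card (S ⧸ Ideal.span {(p : S)}) = p ^ Module.finrank ℤ_[p] S := by
  rw [← map_maximalIdeal_padic, ← IsLocalRing.finrank_quotient_map (R := ℤ_[p]) (S := S)]
  let : Field (ℤ_[p] ⧸ IsLocalRing.maximalIdeal ℤ_[p]) := Ideal.Quotient.field _
  rw [Module.natCard_eq_pow_finrank (K := ℤ_[p] ⧸ IsLocalRing.maximalIdeal ℤ_[p])]
  congr 1
  have := Nat.card_congr (PadicInt.residueField (p := p)).toEquiv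
  rw [Nat.card_zmod] at this
  exact this

lemma card_quot_two_of_eq (S : Type) [CommRing S] [Algebra ℤ_[2] S] [Module.Finite ℤ_[2] S]
    [Module.Free ℤ_[2] S] :
    Nat.card (S ⧸ Ideal.span {(2 : S)}) = 2 ^ Module.finrank ℤ_[2] S := by
  simpa using card_quot_padic 2 S

lemma natCast_mem_nonZeroDivisors_padic [Module.Free ℤ_[p] S] {m : ℕ} (hm : m ≠ 0) :
    (m : S) ∈ nonZeroDivisors S := by
  rw [mem_nonZeroDivisors_iff_right]
  intro x hx
  have h : (m : ℤ_[p]) • x = 0 := by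
    rw [Algebra.smul_def, map_natCast, mul_comm, hx]
  exact (smul_eq_zero.1 h).resolve_left (Nat.cast_ne_zero.2 hm)

lemma finite_quot_two_mul_padic [Module.Finite ℤ_[p] S] [Module.Free ℤ_[p] S] :
    Finite (S ⧸ Ideal.span {2 * (p : S)}) := by
  have hp0 : p ≠ 0 := (Fact.out : p.Prime).ne_zero
  have hfin : Finite (S ⧸ Ideal.span {(p : S)}) := by
    apply Nat.finite_of_card_ne_zero
    rw [card_quot_padic]
    exact pow_ne_zero _ hp0
  by_cases hp : p = 2
  · subst hp
    have := Ideal.finite_quotient_pow (I := Ideal.span {((2 : ℕ) : S)}) ⟨{((2 : ℕ) : S)}, by simp⟩ 2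
    rw [Ideal.span_singleton_pow, sq] at this
    simpa using this
  · rwa [Ideal.span_singleton_mul_left_unit (isUnit_two_padic p S hp)]

lemma index_squares_padic [Module.Finite ℤ_[p] S] [Module.Free ℤ_[p] S] :
    (squaresSubgroup Sˣ).index =
      Nat.card (S ⧸ Ideal.span {(2 : S)}) * Nat.card {u : Sˣ // u ^ 2 = 1} := by
  have := henselianRing_padic p S
  have := finite_quot_two_mul_padic p S
  exact index_squares_of_henselian (p : S)
    (natCast_mem_nonZeroDivisors_padic p S (Fact.out : p.Prime).ne_zero)
    (by simpa using natCast_mem_nonZeroDivisors_padic p S two_ne_zero)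

end Padic

/-- **Norm isolation lemma.** Let `p` be a prime, `f ∈ ℤ_p[x]` monic of degree `n ≥ 1`
with nonzero discriminant (formalised: `f` squarefree over `ℚ_p`), `R = ℤ_p[x]/(f)`, and
let `N̄ : R^×/(R^×)² → ℤ_p^×/(ℤ_p^×)²` be the map induced by the norm (the determinant of
multiplication, i.e. `Algebra.norm ℤ_p`).  Then `|ker N̄| · |im N̄| = |R^×[2]|` if `p ≠ 2`
and `|ker N̄| · |im N̄| = 2ⁿ · |R^×[2]|` if `p = 2`. -/
theorem padic_norm_isolation (p : ℕ) [Fact p.Prime] (n : ℕ) (hn : 1 ≤ n)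
    (f : Polynomial ℤ_[p]) (hf : f.Monic) (hdeg : f.natDegree = n)
    (hdisc : Squarefree (f.map (algebraMap ℤ_[p] ℚ_[p])))
    (Nbar : ((Polynomial ℤ_[p] ⧸ Ideal.span {f})ˣ ⧸
        squaresSubgroup (Polynomial ℤ_[p] ⧸ Ideal.span {f})ˣ) →*
      (ℤ_[p]ˣ ⧸ squaresSubgroup ℤ_[p]ˣ))
    (hNbar : ∀ u : (Polynomial ℤ_[p] ⧸ Ideal.span {f})ˣ,
      Nbar (QuotientGroup.mk u) =
        QuotientGroup.mk (Units.map (Algebra.norm ℤ_[p] :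
          (Polynomial ℤ_[p] ⧸ Ideal.span {f}) →* ℤ_[p]) u)) :
    (p ≠ 2 →
      Nat.card Nbar.ker * Nat.card Nbar.range =
        Nat.card {u : (Polynomial ℤ_[p] ⧸ Ideal.span {f})ˣ // u ^ 2 = 1}) ∧
    (p = 2 →
      Nat.card Nbar.ker * Nat.card Nbar.range =
        2 ^ n * Nat.card {u : (Polynomial ℤ_[p] ⧸ Ideal.span {f})ˣ // u ^ 2 = 1}) := by
  have hfin : Module.Finite ℤ_[p] (Polynomial ℤ_[p] ⧸ Ideal.span {f}) := hf.finite_quotient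
  have hfree : Module.Free ℤ_[p] (Polynomial ℤ_[p] ⧸ Ideal.span {f}) := hf.free_quotient
  have hrank : Module.finrank ℤ_[p] (Polynomial ℤ_[p] ⧸ Ideal.span {f}) = n := by
    rw [finrank_quotient_span_eq_natDegree' hf, hdeg]
  have key : Nat.card Nbar.ker * Nat.card Nbar.range =
      Nat.card ((Polynomial ℤ_[p] ⧸ Ideal.span {f}) ⧸
          Ideal.span {(2 : Polynomial ℤ_[p] ⧸ Ideal.span {f})}) *
        Nat.card {u : (Polynomial ℤ_[p] ⧸ Ideal.span {f})ˣ // u ^ 2 = 1} := by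
    rw [← Subgroup.index_ker, Subgroup.card_mul_index, ← index_squares_padic p]
    rfl
  rw [key]
  constructor
  · intro hp
    rw [card_quot_two_of_ne p _ hp, one_mul]
  · rintro rfl
    rw [card_quot_two_of_eq, hrank]
end

section
/- Let p be a prime and let E be a finite extension of the p-adic field ℚ_p, with ring of integers O_E and ramification index e of E over ℚ_p. Consider the map O_E^×/(O_E^×)² → ℤ_p^×/(ℤ_p^×)² induced by the field norm N_{E/ℚ_p}. If e is odd, this map is surjective. If p is odd and e is even, this map is not surjective. -/
/-!
Write `O` for the ring of integers of `E`, `k` and `κ` for the residue fields of `O` and `ℤ_p`,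
and `f = [k : κ]`, so that `[E : ℚ_p] = f * e`.

The main tool is `exists_lift_norm_eq`. Let `ζ` generate `k` over `κ`, and let `y ∈ ℤ_p` reduce to
`N_{k/κ}(ζ)`. The minimal polynomial of `ζ` lifts to a monic `g ∈ ℤ_p[X]` of degree `f` with
constant term exactly `(-1)^f y`. By Hensel's lemma in `O`, which is complete for its maximal
ideal because it is free of finite rank over `ℤ_p`, the polynomial `g` has a root `α ∈ O` reducing
to `ζ`. As `g` is irreducible modulo `p`, it is the minimal polynomial of `α` over `ℚ_p`, and hence
`N_{E/ℚ_p}(α) = y ^ e`.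

Fix a generator `ζ` of the cyclic group `kˣ`; its norm generates `κˣ`, since the norm of finite
fields is surjective on units.

* `e` odd: let `z` be a unit of `ℤ_p`. If the residue of `z` is an odd power of `N(ζ)` (always the
  case for `p = 2`), then `y = z c²` reduces to `N(ζ)` for a suitable unit `c`, and
  `N(α) = y ^ e` is `z` times a square. Otherwise `p` is odd and the residue of `z` is a nonzero
  square, so that `z` itself is a square by Hensel's lemma.
* `p` odd, `e` even: any unit `u` of `O` is `α ^ i` times a unit congruent to `1`, and the latter
  is a square by Hensel's lemma. Since `N(α) = y ^ e` is a square, so is `N(u)`. But `ℤ_p` has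
  nonsquare units.
-/

section

open Polynomial IsLocalRing

/-- For `x` in a finite extension `L / F`, where `r = [L : F(x)]`, the norm of `x` is the `r`-th
power of the norm from `F(x)`, which is read off the constant term of the minimal polynomial. -/
theorem norm_eq_minpoly_coeff_pow {F L : Type*} [Field F] [Field L] [Algebra F L]
    [FiniteDimensional F L] (x : L) (r : ℕ)
    (hr : (minpoly F x).natDegree * r = Module.finrank F L) :
    Algebra.norm F x = ((-1) ^ (minpoly F x).natDegree * (minpoly F x).coeff 0) ^ r := by
  have hx : IsIntegral F x := Algebra.IsIntegral.isIntegral x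
  have h1 := Module.finrank_mul_finrank F (IntermediateField.adjoin F {x}) L
  rw [IntermediateField.adjoin.finrank hx, ← hr] at h1
  have h2 := Nat.eq_of_mul_eq_mul_left (minpoly.natDegree_pos hx) h1
  rw [Algebra.norm_eq_norm_adjoin, h2, ← IntermediateField.adjoin.powerBasis_gen hx,
    Algebra.PowerBasis.norm_gen_eq_coeff_zero_minpoly, IntermediateField.adjoin.powerBasis_gen hx,
    IntermediateField.adjoin.powerBasis_dim, IntermediateField.minpoly_gen]

theorem henselianLocalRing_of_isAdicComplete (A : Type*) [CommRing A] [IsLocalRing A]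
    [IsAdicComplete (maximalIdeal A) A] : HenselianLocalRing A where
  is_henselian f hf a h₁ h₂ :=
    HenselianRing.is_henselian (I := maximalIdeal A) f hf a h₁ (h₂.map _)

/-- Hensel's lemma for `X² - u`: if `2` is a unit, then an element whose residue is a nonzero
square is a square. -/
theorem exists_sq_eq_of_residue {A : Type*} [CommRing A] [HenselianLocalRing A]
    (h2 : IsUnit (2 : A)) (u : A) (c : ResidueField A) (hc : c ≠ 0)
    (h : residue A u = c ^ 2) : ∃ v : A, u = v ^ 2 := by
  have H := ((HenselianLocalRing.TFAE A).out 0 1).mp ‹_›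
  have h2' : (2 : ResidueField A) ≠ 0 := by
    rw [← map_ofNat (residue A) 2]
    exact (h2.map (residue A)).ne_zero
  obtain ⟨v, hv, -⟩ := H (X ^ 2 - C u) (monic_X_pow_sub_C u two_ne_zero) c
    (by simp [← h])
    (by
      rw [derivative_sub, derivative_X_pow, derivative_C, sub_zero]
      simp only [map_mul, map_pow, aeval_X, Nat.cast_ofNat, map_ofNat]
      exact mul_ne_zero h2' (pow_ne_zero _ hc))
  refine ⟨v, ?_⟩
  simp only [IsRoot.def, eval_sub, eval_pow, eval_X, eval_C] at hv
  exact (sub_eq_zero.mp hv).symm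

section
variable {p : ℕ} [Fact p.Prime] {O : Type*} [CommRing O] [Algebra ℤ_[p] O]
  [Module.Finite ℤ_[p] O] {P : Ideal O} {e : ℕ}

/-- The prime `p` generates a proper ideal of `O`, as some maximal ideal of `O` lies over it. -/
theorem ramification_ne_zero [FaithfulSMul ℤ_[p] O]
    (he : (maximalIdeal ℤ_[p]).map (algebraMap ℤ_[p] O) = P ^ e) : e ≠ 0 := by
  rintro rfl
  rw [pow_zero, Ideal.one_eq_top] at he
  obtain ⟨Q, hQ, hQ'⟩ :=
    Ideal.exists_maximal_ideal_liesOver_of_isIntegral (S := O) (maximalIdeal ℤ_[p])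
  have : (maximalIdeal ℤ_[p]).map (algebraMap ℤ_[p] O) ≤ Q := by
    rw [Ideal.map_le_iff_le_comap]
    exact hQ'.over.le
  rw [he, top_le_iff] at this
  exact hQ.ne_top this

/-- Any maximal ideal of `O` lies over `p`, hence contains `P ^ e` and so equals `P`. -/
theorem isLocalRing_of_map_eq_pow (hP : P.IsMaximal)
    (he : (maximalIdeal ℤ_[p]).map (algebraMap ℤ_[p] O) = P ^ e) : IsLocalRing O := by
  refine IsLocalRing.of_unique_max_ideal ⟨P, hP, fun Q hQ => ?_⟩
  have h1 : Q.comap (algebraMap ℤ_[p] O) = maximalIdeal ℤ_[p] :=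
    IsLocalRing.eq_maximalIdeal (Ideal.isMaximal_comap_of_isIntegral_of_isMaximal Q)
  have h2 : P ^ e ≤ Q := by
    rw [← he, Ideal.map_le_iff_le_comap, h1]
  exact (hP.eq_of_le hQ.ne_top (hQ.isPrime.le_of_pow_le h2)).symm

/-- `O` is complete for `P`: in coordinates with respect to a `ℤ_p`-basis of `O`, the ideal
`P ^ (e * i) = p ^ i O` consists of the vectors with all entries divisible by `p ^ i`, so limits
can be taken coordinatewise in `ℤ_p`. -/
theorem isAdicComplete_of_map_eq_pow [IsDomain O] [FaithfulSMul ℤ_[p] O] (hP : P ≠ ⊤)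
    (he : (maximalIdeal ℤ_[p]).map (algebraMap ℤ_[p] O) = P ^ e) : IsAdicComplete P O := by
  have he0 := ramification_ne_zero he
  have : IsNoetherianRing O := IsNoetherianRing.of_finite ℤ_[p] O
  have : Module.IsTorsionFree ℤ_[p] O := inferInstance
  have hH : IsHausdorff P O := IsHausdorff.of_isDomain _ hP
  let b := Module.finBasis ℤ_[p] O
  have hpow : ∀ i, P ^ (e * i) = Ideal.span {algebraMap ℤ_[p] O (p ^ i)} := fun i => by
    rw [pow_mul, ← he, PadicInt.maximalIdeal_eq_span_p, Ideal.map_span, Set.image_singleton,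
      Ideal.span_singleton_pow, map_pow]
  have hmem : ∀ i x, x ∈ P ^ (e * i) ↔ ∀ j, b.repr x j ∈ maximalIdeal ℤ_[p] ^ i := by
    intro i x
    simp only [hpow, PadicInt.maximalIdeal_eq_span_p, Ideal.span_singleton_pow,
      Ideal.mem_span_singleton']
    constructor
    · rintro ⟨a, rfl⟩ j
      exact ⟨b.repr a j, by rw [mul_comm a, ← Algebra.smul_def]; simp [mul_comm]⟩
    · intro h
      choose a ha using h
      refine ⟨∑ j, a j • b j, ?_⟩
      rw [mul_comm, ← Algebra.smul_def, Finset.smul_sum]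
      conv_rhs => rw [← b.sum_repr x]
      refine Finset.sum_congr rfl fun j _ => ?_
      rw [← ha j, smul_smul, mul_comm]
  refine { hH with prec' := fun f hf => ?_ }
  simp only [smul_eq_mul, Ideal.mul_top, SModEq.sub_mem] at hf ⊢
  -- the subsequence `f (e * n)` is `p`-adically Cauchy in each coordinate
  have hlim : ∀ j, ∃ L : ℤ_[p], ∀ n, b.repr (f (e * n)) j - L ∈ maximalIdeal ℤ_[p] ^ n := by
    intro j
    have := IsPrecomplete.prec (I := maximalIdeal ℤ_[p]) (M := ℤ_[p]) inferInstance
      (f := fun n => b.repr (f (e * n)) j) (by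
        intro m n hmn
        simp only [smul_eq_mul, Ideal.mul_top, SModEq.sub_mem]
        have := (hmem m _).mp (hf (Nat.mul_le_mul_left e hmn)) j
        simpa using this)
    simpa only [smul_eq_mul, Ideal.mul_top, SModEq.sub_mem] using this
  choose L hL using hlim
  refine ⟨∑ j, L j • b j, fun n => ?_⟩
  have h1 : f (e * n) - ∑ j, L j • b j ∈ P ^ (e * n) := by
    rw [hmem]
    intro j
    have : b.repr (∑ j, L j • b j) j = L j := by
      rw [b.repr_sum_self]
    rw [map_sub, Finsupp.sub_apply, this]
    exact hL j n
  have hle : n ≤ e * n := Nat.le_mul_of_pos_left n (Nat.pos_of_ne_zero he0)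
  have := Ideal.add_mem _ (hf hle) (Ideal.pow_le_pow_right hle h1)
  simpa using this

variable {E : Type*} [Field E] [Algebra ℚ_[p] E] [Algebra ℤ_[p] E]
  [IsScalarTower ℤ_[p] ℚ_[p] E] [Algebra O E] [IsFractionRing O E] [IsScalarTower ℤ_[p] O E]

theorem residueField_card : Nat.card (ResidueField ℤ_[p]) = p := by
  rw [Nat.card_congr (PadicInt.residueField (p := p)).toEquiv, Nat.card_zmod]

/-- The identity `f * e = [E : ℚ_p]`, obtained by counting the elements of `O / pO = O / P ^ e`
in two ways. -/
theorem finrank_eq_mul [FaithfulSMul ℤ_[p] O] [IsDedekindDomain O] [IsLocalRing O]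
    [IsLocalHom (algebraMap ℤ_[p] O)]
    (he : (maximalIdeal ℤ_[p]).map (algebraMap ℤ_[p] O) = maximalIdeal O ^ e) :
    Module.finrank (ResidueField ℤ_[p]) (ResidueField O) * e = Module.finrank ℚ_[p] E := by
  have hp : 1 < p := (Fact.out : p.Prime).one_lt
  have : Finite (ResidueField ℤ_[p]) :=
    Nat.finite_of_card_ne_zero (by rw [residueField_card]; omega)
  have h1 := IsLocalRing.finrank_quotient_map (R := ℤ_[p]) (S := O)
  rw [← IsFractionRing.finrank_eq ℤ_[p] ℚ_[p] O E] at h1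
  have h2 : Nat.card (O ⧸ (maximalIdeal ℤ_[p]).map (algebraMap ℤ_[p] O)) =
      p ^ Module.finrank ℚ_[p] E := by
    rw [← h1]
    let _ : Field (ℤ_[p] ⧸ maximalIdeal ℤ_[p]) := Ideal.Quotient.field _
    rw [Module.natCard_eq_pow_finrank (K := ℤ_[p] ⧸ maximalIdeal ℤ_[p])]
    congr 1
    exact residueField_card
  have h3 : Nat.card (O ⧸ maximalIdeal O) =
      p ^ Module.finrank (ResidueField ℤ_[p]) (ResidueField O) := by
    have := Module.natCard_eq_pow_finrank (K := ResidueField ℤ_[p]) (V := ResidueField O)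
    rwa [residueField_card] at this
  rw [he] at h2
  have h4 := cardQuot_pow_of_prime (P := maximalIdeal O) (i := e) ?_; swap
  · intro h0
    rw [h0, ← Ideal.zero_eq_bot, zero_pow (ramification_ne_zero he), Ideal.zero_eq_bot,
      Ideal.map_eq_bot_iff_of_injective (FaithfulSMul.algebraMap_injective ℤ_[p] O)] at he
    exact IsDiscreteValuationRing.not_a_field ℤ_[p] he
  rw [Submodule.cardQuot_apply, Submodule.cardQuot_apply, h2, h3, ← pow_mul] at h4
  exact (Nat.pow_right_injective hp h4).symm

/-- If `ζ` generates the residue field of `O` and `y` reduces to the norm of `ζ`, then `ζ` has a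
lift to `O` whose norm to `ℚ_p` is exactly `y ^ e`. -/
theorem exists_lift_norm_eq [FaithfulSMul ℤ_[p] O] [IsDedekindDomain O] [HenselianLocalRing O]
    [IsLocalHom (algebraMap ℤ_[p] O)] [FiniteDimensional ℚ_[p] E]
    (he : (maximalIdeal ℤ_[p]).map (algebraMap ℤ_[p] O) = maximalIdeal O ^ e)
    (ζ : ResidueField O)
    (hζ : IntermediateField.adjoin (ResidueField ℤ_[p]) {ζ} = ⊤)
    (y : ℤ_[p]) (hy : residue ℤ_[p] y = Algebra.norm (ResidueField ℤ_[p]) ζ) :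
    ∃ α : O, residue O α = ζ ∧ Algebra.norm ℚ_[p] (algebraMap O E α) = (y : ℚ_[p]) ^ e := by
  have hp : p ≠ 0 := (Fact.out : p.Prime).ne_zero
  have : Finite (ResidueField ℤ_[p]) :=
    Nat.finite_of_card_ne_zero (by rwa [residueField_card])
  have hint : IsIntegral (ResidueField ℤ_[p]) ζ := Algebra.IsIntegral.isIntegral ζ
  set m := minpoly (ResidueField ℤ_[p]) ζ with hm
  have hdeg : m.natDegree = Module.finrank (ResidueField ℤ_[p]) (ResidueField O) :=
    (Field.primitive_element_iff_minpoly_natDegree_eq _ ζ).mp hζ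
  have hpos : 0 < m.natDegree := minpoly.natDegree_pos hint
  have hnorm := norm_eq_minpoly_coeff_pow (F := ResidueField ℤ_[p]) ζ 1
    (by rw [mul_one]; exact hdeg)
  rw [pow_one, ← hm] at hnorm
  have hmonic : m.Monic := minpoly.monic hint
  obtain ⟨g₀, hg₀, hg₀deg, hg₀mon⟩ := lifts_and_natDegree_eq_and_monic
    (f := residue ℤ_[p]) (p := m)
    ((mem_lifts _).mpr (map_surjective _ residue_surjective m)) hmonic
  have hsq : ∀ {A : Type} [CommRing A] (a : A),
      (-1) ^ m.natDegree * ((-1) ^ m.natDegree * a) = a := fun a => by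
    rw [← mul_assoc, ← mul_pow]; simp
  -- adjusting the constant term of `g₀` to `(-1) ^ f * y` does not change the reduction
  obtain ⟨g, hg, hgdeg, hgmon, hg0⟩ : ∃ g : ℤ_[p][X], g.map (residue ℤ_[p]) = m ∧
      g.natDegree = m.natDegree ∧ g.Monic ∧ g.coeff 0 = (-1) ^ m.natDegree * y := by
    have hlt : (C ((-1) ^ m.natDegree * y - g₀.coeff 0)).degree < g₀.degree :=
      lt_of_le_of_lt degree_C_le (natDegree_pos_iff_degree_pos.mp (by rw [hg₀deg]; exact hpos))
    refine ⟨g₀ + C ((-1) ^ m.natDegree * y - g₀.coeff 0), ?_, ?_, hg₀mon.add_of_left hlt,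
      by rw [coeff_add, coeff_C_zero, add_sub_cancel]⟩
    · have hc : residue ℤ_[p] (g₀.coeff 0) = m.coeff 0 := by rw [← hg₀, coeff_map]
      rw [Polynomial.map_add, hg₀, map_C, map_sub, hc, map_mul, hy, hnorm, map_pow, map_neg,
        map_one, hsq, sub_self, C_0, add_zero]
    · rw [natDegree_add_eq_left_of_degree_lt hlt, hg₀deg]
  have hroot : aeval ζ (g.map (algebraMap ℤ_[p] O)) = 0 := by
    have h : aeval ζ (g.map (residue ℤ_[p])) = 0 := by rw [hg]; exact minpoly.aeval _ _
    rw [aeval_def, eval₂_map] at h ⊢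
    exact h
  have hsep : aeval ζ (derivative (g.map (algebraMap ℤ_[p] O))) ≠ 0 := by
    have h : aeval ζ (derivative (g.map (residue ℤ_[p]))) ≠ 0 := by
      rw [hg]
      exact (Algebra.IsSeparable.isSeparable (ResidueField ℤ_[p]) ζ).aeval_derivative_ne_zero
        (minpoly.aeval _ _)
    rw [derivative_map, aeval_def, eval₂_map] at h ⊢
    exact h
  have H := ((HenselianLocalRing.TFAE O).out 0 1).mp ‹_›
  obtain ⟨α, hα, hαζ⟩ := H (g.map (algebraMap ℤ_[p] O)) (hgmon.map _) ζ hroot hsep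
  refine ⟨α, hαζ, ?_⟩
  have hirr : Irreducible (g.map (algebraMap ℤ_[p] ℚ_[p])) := by
    rw [← hgmon.irreducible_iff_irreducible_map_fraction_map]
    exact hgmon.irreducible_of_irreducible_map (residue ℤ_[p]) _
      (by rw [hg]; exact minpoly.irreducible hint)
  have hmin : g.map (algebraMap ℤ_[p] ℚ_[p]) = minpoly ℚ_[p] (algebraMap O E α) := by
    refine minpoly.eq_of_irreducible_of_monic hirr ?_ (hgmon.map _)
    rw [aeval_map_algebraMap, aeval_algebraMap_apply]
    rw [IsRoot.def, eval_map_algebraMap] at hα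
    rw [hα, map_zero]
  have hmdeg : (minpoly ℚ_[p] (algebraMap O E α)).natDegree = m.natDegree := by
    rw [← hmin, hgmon.natDegree_map, hgdeg]
  rw [norm_eq_minpoly_coeff_pow _ e (by rw [hmdeg, hdeg]; exact finrank_eq_mul he), hmdeg, ← hmin,
    coeff_map, hg0]
  simp only [map_mul, map_pow, map_neg, map_one, hsq]
  rfl

/-- The result for any ring `O` with the properties of the ring of integers of `E`. -/
theorem norm_units_aux [FaithfulSMul ℤ_[p] O] [IsDedekindDomain O] [FiniteDimensional ℚ_[p] E]
    (hP : P.IsMaximal)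
    (he : (maximalIdeal ℤ_[p]).map (algebraMap ℤ_[p] O) = P ^ e) :
    (Odd e → ∀ z : ℤ_[p]ˣ, ∃ (u : Oˣ) (w : ℤ_[p]ˣ),
        Algebra.norm ℚ_[p] (algebraMap O E u) = ((z : ℤ_[p]) : ℚ_[p]) * ((w : ℤ_[p]) : ℚ_[p]) ^ 2) ∧
    (p ≠ 2 → Even e → ¬ ∀ z : ℤ_[p]ˣ, ∃ (u : Oˣ) (w : ℤ_[p]ˣ),
        Algebra.norm ℚ_[p] (algebraMap O E u) =
          ((z : ℤ_[p]) : ℚ_[p]) * ((w : ℤ_[p]) : ℚ_[p]) ^ 2) := by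
  have hp : p.Prime := Fact.out
  have hloc : IsLocalRing O := isLocalRing_of_map_eq_pow hP he
  obtain rfl : P = maximalIdeal O := IsLocalRing.eq_maximalIdeal hP
  have : IsAdicComplete (maximalIdeal O) O := isAdicComplete_of_map_eq_pow hP.ne_top he
  have : HenselianLocalRing O := henselianLocalRing_of_isAdicComplete O
  have : HenselianLocalRing ℤ_[p] := henselianLocalRing_of_isAdicComplete ℤ_[p]
  have : IsLocalHom (algebraMap ℤ_[p] O) :=
    (Algebra.IsIntegral.isLocalHom ℤ_[p] O)
  have hfin : Finite (ResidueField ℤ_[p]) :=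
    Nat.finite_of_card_ne_zero (by rw [residueField_card]; exact hp.ne_zero)
  have : Finite (ResidueField O) := Module.finite_of_finite (ResidueField ℤ_[p])
  have h2 : p ≠ 2 → IsUnit (2 : ℤ_[p]) := fun h => by
    rw [← Nat.cast_ofNat, PadicInt.isUnit_iff, PadicInt.norm_natCast_eq_one_iff]
    exact (Nat.coprime_primes hp Nat.prime_two).mpr h
  obtain ⟨ζ, hζ⟩ := IsCyclic.exists_generator (α := (ResidueField O)ˣ)
  have hadj : IntermediateField.adjoin (ResidueField ℤ_[p]) {(ζ : ResidueField O)} = ⊤ := by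
    rw [eq_top_iff]
    rintro x -
    by_cases hx : x = 0
    · rw [hx]; exact zero_mem _
    obtain ⟨i, hi⟩ := Subgroup.mem_zpowers_iff.mp (hζ (Units.mk0 x hx))
    have hi' : x = (ζ : ResidueField O) ^ i := by
      rw [← Units.val_zpow_eq_zpow_val, hi, Units.val_mk0]
    rw [hi']
    exact zpow_mem (IntermediateField.mem_adjoin_simple_self _ _) i
  set N : (ResidueField ℤ_[p])ˣ := Units.map (Algebra.norm (ResidueField ℤ_[p])) ζ with hN
  have key : ∀ y : ℤ_[p], residue ℤ_[p] y = N → ∃ α : Oˣ, residue O α = ζ ∧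
      Algebra.norm ℚ_[p] (algebraMap O E α) = (y : ℚ_[p]) ^ e := by
    intro y hy
    obtain ⟨α, hα, hα'⟩ := exists_lift_norm_eq (E := E) he (ζ : ResidueField O) hadj y hy
    have hu : IsUnit α := by
      rw [← residue_ne_zero_iff_isUnit, hα]
      exact ζ.ne_zero
    exact ⟨hu.unit, hα, hα'⟩
  constructor
  · intro hodd z
    have hz : ∃ i : ℕ, N ^ i = Units.map (residue ℤ_[p]).toMonoidHom z := by
      obtain ⟨t, ht⟩ := FiniteField.unitsMap_norm_surjective (ResidueField ℤ_[p]) (ResidueField O)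
        (Units.map (residue ℤ_[p]).toMonoidHom z)
      obtain ⟨i, rfl⟩ := mem_powers_iff_mem_zpowers.mpr (hζ t)
      exact ⟨i, by rw [← ht, hN]; simp⟩
    obtain ⟨i, hi⟩ := hz
    by_cases hcase : ∃ j, N ^ (2 * j + 1) = Units.map (residue ℤ_[p]).toMonoidHom z
    · obtain ⟨j, hj⟩ := hcase
      obtain ⟨c, hc⟩ := residue_surjective (R := ℤ_[p])
        ((N⁻¹ ^ j : (ResidueField ℤ_[p])ˣ) : ResidueField ℤ_[p])
      have hcu : IsUnit c := by
        rw [← residue_ne_zero_iff_isUnit, hc]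
        exact Units.ne_zero _
      obtain ⟨c, rfl⟩ := hcu
      have hj' : residue ℤ_[p] z = (N : ResidueField ℤ_[p]) ^ (2 * j + 1) := by
        have := congrArg Units.val hj
        simpa using this.symm
      obtain ⟨α, -, hα⟩ := key (z * c ^ 2) (by
        rw [map_mul, map_pow, hc, hj', Units.val_pow_eq_pow_val, Units.val_inv_eq_inv_val]
        rw [pow_succ, pow_mul', mul_right_comm, ← mul_pow, inv_pow,
          mul_inv_cancel₀ (pow_ne_zero _ N.ne_zero), one_pow, one_mul])
      obtain ⟨k, rfl⟩ := hodd
      refine ⟨α, z ^ k * c ^ (2 * k + 1), ?_⟩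
      rw [hα]
      push_cast
      ring
    · -- for `p = 2` the group of units of the residue field is trivial
      have hp2 : p ≠ 2 := by
        rintro rfl
        have hs : Subsingleton (ResidueField ℤ_[2])ˣ := by
          rw [← Finite.card_le_one_iff_subsingleton, Nat.card_units, residueField_card]
        exact hcase ⟨0, Subsingleton.elim _ _⟩
      obtain ⟨j, rfl | rfl⟩ := Nat.even_or_odd' i
      · obtain ⟨v, hv⟩ := exists_sq_eq_of_residue (h2 hp2) (z : ℤ_[p])
          (N ^ j : (ResidueField ℤ_[p])ˣ)
          (Units.ne_zero _) (by
            have := congrArg Units.val hi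
            simpa [pow_mul, pow_right_comm] using this.symm)
        have hvu : IsUnit v := isUnit_of_mul_isUnit_left (y := v)
          (by rw [← sq, ← hv]; exact z.isUnit)
        obtain ⟨v, rfl⟩ := hvu
        refine ⟨1, v⁻¹, ?_⟩
        have h1 : (((v : ℤ_[p]) : ℚ_[p])) * (((v⁻¹ : ℤ_[p]ˣ) : ℤ_[p]) : ℚ_[p]) = 1 := by
          rw [← PadicInt.coe_mul, Units.mul_inv, PadicInt.coe_one]
        rw [hv, PadicInt.coe_pow, ← mul_pow, h1]
        simp
      · exact absurd ⟨j, hi⟩ hcase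
  · intro hp2 ⟨k, hk⟩ H
    obtain ⟨y, hy⟩ := residue_surjective (R := ℤ_[p]) (N : ResidueField ℤ_[p])
    obtain ⟨α, hα, hαN⟩ := key y hy
    obtain ⟨a, ha⟩ : ∃ a : ResidueField ℤ_[p], ¬ IsSquare a :=
      FiniteField.exists_nonsquare fun hchar => by
        have h0 : (2 : ResidueField ℤ_[p]) = 0 := by
          have := ringChar.Nat.cast_ringChar (R := ResidueField ℤ_[p])
          rwa [hchar] at this
        rw [← map_ofNat (residue ℤ_[p]) 2] at h0
        exact ((h2 hp2).map (residue ℤ_[p])).ne_zero h0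
    obtain ⟨z, rfl⟩ := residue_surjective (R := ℤ_[p]) a
    have hzu : IsUnit z := by
      rw [← residue_ne_zero_iff_isUnit]
      rintro h
      exact ha (h ▸ IsSquare.zero)
    obtain ⟨z, rfl⟩ := hzu
    obtain ⟨u, w, huw⟩ := H z
    obtain ⟨i, hi⟩ := mem_powers_iff_mem_zpowers.mpr (hζ (Units.map (residue O).toMonoidHom u))
    have hres : residue O ((u * (α ^ i)⁻¹ : Oˣ) : O) = 1 ^ 2 := by
      have h1 : residue O u = residue O α ^ i := by
        rw [hα]
        have := congrArg Units.val hi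
        simpa using this.symm
      have h3 : residue O ((u * (α ^ i)⁻¹ : Oˣ) : O) * residue O α ^ i = residue O u := by
        rw [← map_pow, ← map_mul, ← Units.val_pow_eq_pow_val, ← Units.val_mul,
          inv_mul_cancel_right]
      rw [h1] at h3
      rw [one_pow]
      exact mul_right_cancel₀ (pow_ne_zero _ (by rw [hα]; exact ζ.ne_zero))
        (h3.trans (one_mul _).symm)
    obtain ⟨s, hs⟩ := exists_sq_eq_of_residue (A := O)
      (by rw [← map_ofNat (algebraMap ℤ_[p] O) 2]; exact (h2 hp2).map _) _ 1 one_ne_zero hres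
    have hus : (u : O) = s ^ 2 * α ^ i := by
      rw [← hs, ← Units.val_pow_eq_pow_val, ← Units.val_mul, inv_mul_cancel_right]
    set t : ℚ_[p] := Algebra.norm ℚ_[p] (algebraMap O E s) * ((y : ℚ_[p]) ^ k) ^ i with ht
    have hut : Algebra.norm ℚ_[p] (algebraMap O E u) = t ^ 2 := by
      rw [hus, map_mul, map_pow, map_pow, map_mul, map_pow, map_pow, hαN, hk, ht]
      ring
    have hw0 : ((w : ℤ_[p]) : ℚ_[p]) ≠ 0 := by
      rw [Ne, PadicInt.coe_eq_zero]
      exact w.ne_zero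
    have hz : ((z : ℤ_[p]) : ℚ_[p]) = (t / ((w : ℤ_[p]) : ℚ_[p])) ^ 2 := by
      rw [div_pow, ← hut, huw]
      field_simp
    -- `t / w` is integral because its square is a unit of `ℤ_p`
    have hn : ‖t / ((w : ℤ_[p]) : ℚ_[p])‖ ≤ 1 := by
      have h1 := congrArg norm hz
      rw [norm_pow, PadicInt.padic_norm_e_of_padicInt, PadicInt.norm_units] at h1
      nlinarith [norm_nonneg (t / ((w : ℤ_[p]) : ℚ_[p]))]
    obtain ⟨t', ht'⟩ : ∃ t' : ℤ_[p], (t' : ℚ_[p]) = t / ((w : ℤ_[p]) : ℚ_[p]) := ⟨⟨_, hn⟩, rfl⟩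
    have hz' : (z : ℤ_[p]) = t' ^ 2 := by
      rw [← ht', ← PadicInt.coe_pow] at hz
      exact PadicInt.ext hz
    exact ha ⟨residue ℤ_[p] t', by rw [hz', map_pow, sq]⟩

end

end

set_option synthInstance.maxHeartbeats 1000000 in
/-- **Surjectivity of the norm on units modulo squares for local fields.**
Let `E` be a finite extension of `ℚ_p` with ring of integers `O_E = integralClosure ℤ_p E`,
let `P` be the maximal ideal of `O_E` and `e` the ramification index of `E/ℚ_p`, so that
`(p)·O_E = P^e`.  The induced map `O_E^×/(O_E^×)² → ℤ_p^×/(ℤ_p^×)²` coming from the field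
norm `N_{E/ℚ_p}` is surjective when `e` is odd (every unit of `ℤ_p` is, modulo a square of
a unit, the norm of a unit of `O_E`), and is not surjective when `p` is odd and `e` is
even. -/
theorem norm_units_mod_squares_local (p : ℕ) [Fact p.Prime]
    (E : Type) [Field E] [Algebra ℚ_[p] E] [FiniteDimensional ℚ_[p] E]
    [Algebra ℤ_[p] E] [IsScalarTower ℤ_[p] ℚ_[p] E]
    (P : Ideal (integralClosure ℤ_[p] E)) (hP : P.IsMaximal) (e : ℕ)
    (he : (IsLocalRing.maximalIdeal ℤ_[p]).map
      (algebraMap ℤ_[p] (integralClosure ℤ_[p] E)) = P ^ e) :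
    (Odd e →
      ∀ z : ℤ_[p]ˣ, ∃ (u : (integralClosure ℤ_[p] E)ˣ) (w : ℤ_[p]ˣ),
        Algebra.norm ℚ_[p] ((u : integralClosure ℤ_[p] E) : E) =
          ((z : ℤ_[p]) : ℚ_[p]) * ((w : ℤ_[p]) : ℚ_[p]) ^ 2) ∧
    (p ≠ 2 → Even e →
      ¬ ∀ z : ℤ_[p]ˣ, ∃ (u : (integralClosure ℤ_[p] E)ˣ) (w : ℤ_[p]ˣ),
        Algebra.norm ℚ_[p] ((u : integralClosure ℤ_[p] E) : E) =
          ((z : ℤ_[p]) : ℚ_[p]) * ((w : ℤ_[p]) : ℚ_[p]) ^ 2) := by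
  have : CharZero E := charZero_of_injective_algebraMap (algebraMap ℚ_[p] E).injective
  have : IsDedekindDomain (integralClosure ℤ_[p] E) :=
    integralClosure.isDedekindDomain ℤ_[p] ℚ_[p] E
  have : IsFractionRing (integralClosure ℤ_[p] E) E :=
    integralClosure.isFractionRing_of_finite_extension ℚ_[p] E
  have : Module.Finite ℤ_[p] (integralClosure ℤ_[p] E) :=
    IsIntegralClosure.finite ℤ_[p] ℚ_[p] E (integralClosure ℤ_[p] E)
  have : FaithfulSMul ℤ_[p] (integralClosure ℤ_[p] E) :=
    FaithfulSMul.of_field_isFractionRing ℤ_[p] (integralClosure ℤ_[p] E) ℚ_[p] E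
  exact norm_units_aux (E := E) hP he
end

section
/- Let K be a number field of even degree n with signature (r₁,r₂) and ring of integers O_K, and suppose the only roots of unity in K are ±1. Let H⁺(O_K) be the set of equivalence classes of pairs (I, δ), where I is a nonzero fractional ideal of O_K and δ ∈ K^× is totally positive (σ(δ) > 0 for every real embedding σ of K) with I² = δ·O_K, two pairs (I,δ) and (I',δ') being equivalent if there exists κ ∈ K^× with I = κI' and δ = κ²δ'. Then H⁺(O_K) is a finite group under componentwise multiplication and |H⁺(O_K)| = 2^{r₂} · |Cl⁺(K)[2]|, where Cl⁺(K)[2] is the 2-torsion subgroup of the narrow class group of K. -/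
/-!
Write `Pr` for the group of principal ideals, `U` for the unit group, `U⁺` for the totally positive
units, `K⁺` for the totally positive elements of `Kˣ`, and `T` for the group of fractional ideals
whose square has a totally positive generator. Then `P⁺ ≤ Pr ≤ T` and `Cl⁺(K)[2] = T / P⁺`, so

  `|Cl⁺(K)[2]| = [T : Pr] · [Pr : P⁺]`, where `[Pr : P⁺] = [Kˣ : K⁺ U]`.

The projection `(I, δ) ↦ I` maps `H⁺` onto `T`, and the preimage of `Pr` is generated by `P` and the
pairs `(1, u)` with `u ∈ U⁺`; such a pair lies in `P` exactly when `u ∈ U²`. Hence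

  `|H⁺ / P| = [T : Pr] · [U⁺ : U²]`.

Finally `[U : U⁺] · [Kˣ : K⁺ U] = [Kˣ : K⁺] = 2 ^ r₁` by weak approximation
(`totallyPositive_index`) and `[U⁺ : U²] · [U : U⁺] = [U : U²] = 2 ^ (r₁ + r₂)` by Dirichlet's unit
theorem (`unitSquares_relIndex`, `rank_add_one`), so `[U⁺ : U²] = 2 ^ r₂ · [Kˣ : K⁺ U]`. The common
factor `[T : Pr]` is finite because the class group is.
-/

open NumberField FractionalIdeal
open scoped nonZeroDivisors

/-! ### Signs -/

section
variable (K : Type*) [Field K]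

/-- The subgroup of totally positive elements of `Kˣ`. -/
def totallyPositive : Subgroup Kˣ where
  carrier := {x | ∀ σ : K →+* ℝ, 0 < σ (x : K)}
  one_mem' := fun σ => by simp
  mul_mem' := fun ha hb σ => by simpa using mul_pos (ha σ) (hb σ)
  inv_mem' := fun ha σ => by simpa using ha σ

/-- The signs of an element of `Kˣ` at all real embeddings; `SignTypeˣ` plays the role of
`{±1}`. -/
noncomputable def signMap : Kˣ →* ((K →+* ℝ) → SignTypeˣ) :=
  MonoidHom.pi fun σ => Units.map ((signHom (α := ℝ)).toMonoidHom.comp σ.toMonoidHom)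

theorem signMap_ker : (signMap K).ker = totallyPositive K := by
  ext x
  simp only [MonoidHom.mem_ker, funext_iff]
  refine forall_congr' fun σ => ?_
  rw [Units.ext_iff]
  exact sign_eq_one_iff

variable [NumberField K]

/-- Weak approximation at the real places: an element within distance `1` of `±1` at each real
embedding has the prescribed sign there. -/
theorem signMap_surjective : Function.Surjective (signMap K) := by
  classical
  intro ε
  have hinj : Function.Injective fun σ : K →+* ℝ => Complex.ofRealHom.comp σ := by
    intro σ τ h
    ext x
    exact Complex.ofReal_injective (RingHom.congr_fun h x)
  have : Finite (K →+* ℝ) := Finite.of_injective _ hinj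
  have := Fintype.ofFinite (K →+* ℝ)
  let v : (K →+* ℝ) → InfinitePlace K := fun σ => InfinitePlace.mk (Complex.ofRealHom.comp σ)
  have hv : ∀ σ x, v σ x = |σ x| := fun σ x => by
    simp [v, InfinitePlace.apply]
  have hd := AbsoluteValue.denseRange_algebraMap_pi (v := fun σ => (v σ).1)
    (fun σ => (v σ).isNontrivial) (fun σ τ hne => by
      intro h
      replace h : v σ = v τ := InfinitePlace.eq_iff_isEquiv.2 h
      apply hne
      rcases InfinitePlace.mk_eq_iff.1 h with h | h
      · exact hinj h
      · refine hinj (Eq.trans ?_ h)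
        ext x
        simp [ComplexEmbedding.conjugate])
  obtain ⟨x, hx⟩ := (Metric.denseRange_iff.1 hd)
    (fun σ => WithAbs.toAbs _ (if ε σ = 1 then (1 : K) else -1)) 1 one_pos
  have hx' : ∀ σ : K →+* ℝ, |σ ((if ε σ = 1 then (1 : K) else -1) - x)| < 1 := by
    intro σ
    rw [← hv]
    have := (dist_pi_lt_iff one_pos).1 hx σ
    rw [dist_eq_norm, WithAbs.norm_eq_apply_ofAbs] at this
    exact this
  -- Without real embeddings there is no condition on `x`, which may then vanish.
  have hx0 : x ≠ 0 ∨ IsEmpty (K →+* ℝ) := by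
    by_contra! h
    obtain ⟨rfl, ⟨σ⟩⟩ := h
    have := hx' σ
    split_ifs at this <;> simp at this
  rcases hx0 with hx0 | hem
  · refine ⟨Units.mk0 x hx0, funext fun σ => Units.ext ?_⟩
    change SignType.sign (σ x) = ε σ
    have h1 := hx' σ
    have h2 : ∀ s : SignTypeˣ, s ≠ 1 → (s : SignType) = -1 := by decide
    split_ifs at h1 with h
    · rw [h, Units.val_one, sign_eq_one_iff]
      rw [map_sub, map_one, abs_lt] at h1
      linarith
    · rw [h2 _ h, sign_eq_neg_one_iff]
      rw [map_sub, map_neg, map_one, abs_lt] at h1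
      linarith
  · exact ⟨1, funext fun σ => isEmptyElim σ⟩

theorem totallyPositive_index : (totallyPositive K).index = 2 ^ Nat.card (K →+* ℝ) := by
  rw [← signMap_ker, Subgroup.index_ker, MonoidHom.range_eq_top.2 (signMap_surjective K),
    Subgroup.card_top]
  have : Finite (K →+* ℝ) := Finite.of_injective (fun σ => Complex.ofRealHom.comp σ) fun σ τ h => by
    ext x
    exact Complex.ofReal_injective (RingHom.congr_fun h x)
  rw [Nat.card_fun, show Nat.card SignTypeˣ = 2 by rw [Nat.card_eq_fintype_card]; decide]

/-! ### Squares of units -/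

/-- If `U` surjects onto a free abelian group `Q` of rank `r`, then reducing coordinates mod `2`
identifies `U / (U² · ker q)` with `(ℤ/2)^r`. -/
theorem index_squares_sup_ker {U Q : Type*} [CommGroup U] [CommGroup Q] {r : ℕ}
    (b : Module.Basis (Fin r) ℤ (Additive Q)) (q : U →* Q) (hq : Function.Surjective q) :
    ((powMonoidHom 2 : U →* U).range ⊔ q.ker).index = 2 ^ r := by
  let g : U →* Multiplicative (Fin r → ZMod 2) :=
    (AddMonoidHom.toMultiplicativeRight
      (((Int.castAddHom (ZMod 2)).compLeft (Fin r)).comp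
        b.equivFun.toLinearMap.toAddMonoidHom)).comp q
  have hg : ∀ x i, (g x).toAdd i = ((b.equivFun (Additive.ofMul (q x)) i : ℤ) : ZMod 2) :=
    fun x i => rfl
  have hgs : Function.Surjective g := by
    intro f
    choose a ha using fun i => ZMod.intCast_surjective (f.toAdd i)
    obtain ⟨x, hx⟩ := hq (b.equivFun.symm a).toMul
    refine ⟨x, ?_⟩
    apply Multiplicative.toAdd.injective
    funext i
    rw [hg, hx, ofMul_toMul, LinearEquiv.apply_symm_apply, ha]
  have hgk : g.ker = (powMonoidHom 2 : U →* U).range ⊔ q.ker := by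
    apply le_antisymm
    · intro x hx
      have hx' : ∀ i, (2 : ℤ) ∣ b.equivFun (Additive.ofMul (q x)) i := by
        intro i
        refine (ZMod.intCast_zmod_eq_zero_iff_dvd _ 2).1 ?_
        rw [← hg, MonoidHom.mem_ker.1 hx]
        rfl
      choose a ha using hx'
      obtain ⟨y, hy⟩ := hq (b.equivFun.symm a).toMul
      have hxy : q x = q (y ^ 2) := by
        apply Additive.ofMul.injective
        apply b.equivFun.injective
        rw [map_pow, ofMul_pow, map_nsmul, hy, ofMul_toMul, LinearEquiv.apply_symm_apply]
        funext i
        rw [ha]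
        simp
      rw [show x = y ^ 2 * ((y ^ 2)⁻¹ * x) by group]
      exact Subgroup.mul_mem_sup ⟨y, rfl⟩
        (by rw [MonoidHom.mem_ker, map_mul, map_inv, hxy, inv_mul_cancel])
    · refine sup_le ?_ ?_
      · rintro _ ⟨y, rfl⟩
        rw [MonoidHom.mem_ker, powMonoidHom_apply, map_pow]
        apply Multiplicative.toAdd.injective
        funext i
        rw [toAdd_pow, toAdd_one, Pi.smul_apply, Pi.zero_apply, CharTwo.two_nsmul]
      · intro t ht
        rw [MonoidHom.mem_ker, MonoidHom.comp_apply, MonoidHom.mem_ker.1 ht, map_one]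
  rw [← hgk, Subgroup.index_ker, MonoidHom.range_eq_top.2 hgs, Subgroup.card_top]
  simp

/-- `[U : U²] = 2 ^ (rank + 1)` for `U = (𝓞 K)ˣ`: Dirichlet's unit theorem gives the free part, and
the torsion subgroup is cyclic of even order, hence contributes one more factor `2`. -/
theorem index_squares_units :
    (powMonoidHom 2 : (𝓞 K)ˣ →* (𝓞 K)ˣ).range.index = 2 ^ (Units.rank K + 1) := by
  set S := (powMonoidHom 2 : (𝓞 K)ˣ →* (𝓞 K)ˣ).range with hS
  let T := Units.torsion K
  have h1 : S.relIndex (S ⊔ T) = 2 := by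
    rw [Subgroup.relIndex_sup_left]
    have : S.subgroupOf T = (powMonoidHom 2 : T →* T).range := by
      ext t
      simp only [Subgroup.mem_subgroupOf, hS, MonoidHom.mem_range, powMonoidHom_apply]
      constructor
      · rintro ⟨y, hy⟩
        have hyT : y ∈ T := by
          have ht := t.2
          rw [← hy] at ht
          change IsOfFinOrder (y ^ 2) at ht
          change IsOfFinOrder y
          exact (isOfFinOrder_pow.1 ht).resolve_right (by norm_num)
        exact ⟨⟨y, hyT⟩, Subtype.ext hy⟩
      · rintro ⟨y, rfl⟩
        exact ⟨y, rfl⟩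
    rw [Subgroup.relIndex, this, IsCyclic.index_powMonoidHom_range, Nat.gcd_eq_right_iff_dvd]
    exact Even.two_dvd <| Units.even_torsionOrder K
  have h2 : (S ⊔ T).index = 2 ^ Units.rank K := by
    have := index_squares_sup_ker (Units.basisModTorsion K) (QuotientGroup.mk' T)
      (QuotientGroup.mk'_surjective T)
    rwa [QuotientGroup.ker_mk'] at this
  rw [← Subgroup.relIndex_mul_index (le_sup_left : S ≤ S ⊔ T), h1, h2, pow_succ, mul_comm]

/-- The unit rank is `r₁ + r₂ - 1`, with `r₁`, `r₂` counted by embeddings instead of places. -/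
theorem rank_add_one (r₂ : ℕ)
    (hr₂ : Nat.card {φ : K →+* ℂ // ∃ x, (φ x).im ≠ 0} = 2 * r₂) :
    Units.rank K + 1 = Nat.card (K →+* ℝ) + r₂ := by
  classical
  have hreal : ∀ φ : K →+* ℂ, ComplexEmbedding.IsReal φ ↔ ∀ x, (φ x).im = 0 := by
    intro φ
    rw [ComplexEmbedding.isReal_iff, RingHom.ext_iff]
    simp only [ComplexEmbedding.conjugate_coe_eq, Complex.conj_eq_iff_im]
  have h1 : Nat.card (K →+* ℝ) = InfinitePlace.nrRealPlaces K := by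
    rw [← InfinitePlace.card_real_embeddings, ← Nat.card_eq_fintype_card]
    refine Nat.card_congr (Equiv.ofBijective
      (fun σ => ⟨Complex.ofRealHom.comp σ, (hreal _).2 fun x => by simp⟩) ⟨?_, ?_⟩)
    · intro σ τ h
      ext x
      exact Complex.ofReal_injective (RingHom.congr_fun (Subtype.ext_iff.1 h) x)
    · rintro ⟨φ, hφ⟩
      exact ⟨hφ.embedding, Subtype.ext (RingHom.ext fun x => hφ.coe_embedding_apply x)⟩
  have h2 : r₂ = InfinitePlace.nrComplexPlaces K := by
    have h := InfinitePlace.card_complex_embeddings K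
    rw [← Nat.card_eq_fintype_card] at h
    simp only [hreal, not_forall] at h
    change Nat.card {φ : K →+* ℂ // ∃ x, (φ x).im ≠ 0} = _ at h
    lia
  have h3 : 0 < Fintype.card (InfinitePlace K) := Fintype.card_pos
  have h4 := InfinitePlace.card_eq_nrRealPlaces_add_nrComplexPlaces K
  rw [Units.rank, h1, h2]
  lia
end

/-! ### Units inside `Kˣ` -/

section
variable (K : Type*) [Field K] [NumberField K]

/-- The inclusion `(𝓞 K)ˣ → Kˣ`. -/
noncomputable def unitsIncl : (𝓞 K)ˣ →* Kˣ := Units.map (algebraMap (𝓞 K) K).toMonoidHom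

theorem unitsIncl_injective : Function.Injective (unitsIncl K) :=
  Units.map_injective (IsFractionRing.injective (𝓞 K) K)

theorem toPrincipalIdeal_ker : (toPrincipalIdeal (𝓞 K) K).ker = (unitsIncl K).range := by
  have key : ∀ x : Kˣ, toPrincipalIdeal (𝓞 K) K x = 1 → ∃ a : 𝓞 K, algebraMap (𝓞 K) K a = x := by
    intro x hx
    rw [toPrincipalIdeal_eq_iff] at hx
    have h := mem_spanSingleton_self (𝓞 K)⁰ (x : K)
    rw [hx, Units.val_one, mem_one_iff] at h
    exact h
  ext x
  constructor
  · intro hx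
    obtain ⟨a, ha⟩ := key x hx
    obtain ⟨b, hb⟩ := key x⁻¹ (inv_mem hx)
    have hab : a * b = 1 := by
      apply IsFractionRing.injective (𝓞 K) K
      rw [map_mul, ha, hb, map_one, Units.mul_inv]
    exact ⟨⟨a, b, hab, by rw [mul_comm, hab]⟩, Units.ext ha⟩
  · rintro ⟨u, rfl⟩
    rw [MonoidHom.mem_ker, toPrincipalIdeal_eq_iff, Units.val_one, ← spanSingleton_one,
      spanSingleton_eq_spanSingleton]
    refine ⟨u⁻¹, ?_⟩
    rw [Units.smul_def, Algebra.smul_def]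
    change algebraMap (𝓞 K) K _ * algebraMap (𝓞 K) K _ = 1
    rw [← map_mul, Units.inv_mul, map_one]

theorem unitSquares_relIndex :
    ((unitsIncl K).range.map (powMonoidHom 2)).relIndex (unitsIncl K).range =
      2 ^ (Units.rank K + 1) := by
  rw [← index_squares_units, ← Subgroup.relIndex_top_right,
    ← Subgroup.relIndex_map_map_of_injective _ _ (unitsIncl_injective K), ← MonoidHom.range_eq_map]
  congr 1
  rw [MonoidHom.range_eq_map, MonoidHom.range_eq_map, Subgroup.map_map, Subgroup.map_map]
  rfl
end

/-! ### Comparison of indices -/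

/-- **Parametrisation of 2-torsion in the narrow class group.**
Let `K` be a number field of even degree `n` and signature `(r₁, r₂)` whose only roots of
unity are `±1`.  Let `H⁺` be the group of pairs `(I, δ)` with `I` an invertible fractional
ideal of `O_K` and `δ ∈ K^×` totally positive with `I² = δ·O_K`, let `P ≤ H⁺` be the
subgroup of pairs `(κ·O_K, κ²)` for `κ ∈ K^×` (so `H⁺(O_K) = H⁺/P`), and let the narrow
class group be the quotient of the group of invertible fractional ideals by the subgroup
`P⁺` of principal ideals with totally positive generator.  Then `H⁺/P` is a finite group
and `|H⁺/P| = 2^(r₂) · |Cl⁺(K)[2]|`. -/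
theorem Hplus_card_eq_two_torsion_narrow_class_group (n r₁ r₂ : ℕ) (hn_even : Even n)
    (hn : 0 < n) (K : Type) [Field K] [NumberField K]
    (hdeg : Module.finrank ℚ K = n)
    (hr₁ : Nat.card (K →+* ℝ) = r₁)
    (hr₂ : Nat.card {φ : K →+* ℂ // ∃ x, (φ x).im ≠ 0} = 2 * r₂)
    (hroots : ∀ x : K, (∃ k : ℕ, 0 < k ∧ x ^ k = 1) → x = 1 ∨ x = -1)
    (Hp : Subgroup ((FractionalIdeal (𝓞 K)⁰ K)ˣ × Kˣ))
    (hHp : ∀ x : (FractionalIdeal (𝓞 K)⁰ K)ˣ × Kˣ, x ∈ Hp ↔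
      (∀ σ : K →+* ℝ, 0 < σ (x.2 : K)) ∧
      (x.1 : FractionalIdeal (𝓞 K)⁰ K) ^ 2 = spanSingleton (𝓞 K)⁰ (x.2 : K))
    (P : Subgroup Hp)
    (hP : ∀ y : Hp, y ∈ P ↔ ∃ κ : Kˣ,
      ((y : (FractionalIdeal (𝓞 K)⁰ K)ˣ × Kˣ).1 : FractionalIdeal (𝓞 K)⁰ K) =
        spanSingleton (𝓞 K)⁰ (κ : K) ∧
      (y : (FractionalIdeal (𝓞 K)⁰ K)ˣ × Kˣ).2 = κ ^ 2)
    (Pplus : Subgroup (FractionalIdeal (𝓞 K)⁰ K)ˣ)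
    (hPplus : ∀ I : (FractionalIdeal (𝓞 K)⁰ K)ˣ, I ∈ Pplus ↔ ∃ α : Kˣ,
      (∀ σ : K →+* ℝ, 0 < σ (α : K)) ∧
      (I : FractionalIdeal (𝓞 K)⁰ K) = spanSingleton (𝓞 K)⁰ (α : K)) :
    Finite (Hp ⧸ P) ∧
    Nat.card (Hp ⧸ P) =
      2 ^ r₂ * Nat.card {c : (FractionalIdeal (𝓞 K)⁰ K)ˣ ⧸ Pplus // c ^ 2 = 1} := by
  set Kp := totallyPositive K with hKp
  set π := toPrincipalIdeal (𝓞 K) K with hπ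
  set U := (unitsIncl K).range with hU
  set U2 := U.map (powMonoidHom 2) with hU2
  have hker : π.ker = U := toPrincipalIdeal_ker K
  have hHp' : ∀ x : (FractionalIdeal (𝓞 K)⁰ K)ˣ × Kˣ, x ∈ Hp ↔ x.2 ∈ Kp ∧ π x.2 = x.1 ^ 2 := by
    intro x
    rw [hHp, toPrincipalIdeal_eq_iff, Units.val_pow_eq_pow_val, eq_comm]
    rfl
  have hP' : ∀ y : Hp, y ∈ P ↔ ∃ κ : Kˣ, π κ = y.1.1 ∧ y.1.2 = κ ^ 2 := by
    intro y
    simp only [hP, hπ, toPrincipalIdeal_eq_iff, eq_comm (b := spanSingleton _ _)]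
  have hPplus' : Pplus = Kp.map π := by
    ext I
    simp only [hPplus, Subgroup.mem_map, hπ, toPrincipalIdeal_eq_iff,
      eq_comm (b := spanSingleton _ _)]
    rfl
  have hsq : ∀ κ : Kˣ, κ ^ 2 ∈ Kp := by
    intro κ σ
    rw [Units.val_pow_eq_pow_val, map_pow]
    exact sq_pos_of_ne_zero ((map_ne_zero σ).2 κ.ne_zero)
  clear hHp hP hPplus
  -- `T` is the preimage of `Cl⁺(K)[2]` in the group of ideals.
  let T : Subgroup (FractionalIdeal (𝓞 K)⁰ K)ˣ := Pplus.comap (powMonoidHom 2)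
  have hPr : Pplus ≤ π.range := hPplus' ▸ Subgroup.map_le_range _ _
  have hPrT : π.range ≤ T := by
    rintro _ ⟨κ, rfl⟩
    rw [Subgroup.mem_comap, hPplus', powMonoidHom_apply, ← map_pow]
    exact Subgroup.mem_map_of_mem _ (hsq κ)
  have hcl : Nat.card {c : (FractionalIdeal (𝓞 K)⁰ K)ˣ ⧸ Pplus // c ^ 2 = 1} =
      Pplus.relIndex T := by
    conv_rhs => rw [← QuotientGroup.ker_mk' Pplus]
    rw [Subgroup.relIndex_ker]
    refine Nat.card_congr (Equiv.subtypeEquivRight fun c => ?_)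
    obtain ⟨I, rfl⟩ := QuotientGroup.mk'_surjective Pplus c
    rw [← map_pow, QuotientGroup.mk'_apply, QuotientGroup.eq_one_iff]
    constructor
    · exact fun h => ⟨I, h, rfl⟩
    · rintro ⟨J, hJ, hJI⟩
      rw [← QuotientGroup.eq_one_iff, QuotientGroup.mk_pow, ← QuotientGroup.mk'_apply, ← hJI,
        QuotientGroup.mk'_apply, ← QuotientGroup.mk_pow, QuotientGroup.eq_one_iff]
      exact hJ
  -- Finiteness of the class group.
  have ha : π.range.relIndex T ≠ 0 := by
    have : π.range.index ≠ 0 := by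
      rw [Subgroup.index, ← Nat.card_congr (ClassGroup.equiv (R := 𝓞 K) K).toEquiv]
      exact Nat.card_pos.ne'
    intro h
    exact this (Subgroup.index_eq_zero_of_relIndex_eq_zero h)
  have hd : Pplus.relIndex π.range = (Kp ⊔ U).index := by
    rw [← Subgroup.index_comap, hPplus', Subgroup.comap_map_eq, hker]
  have hcd : Kp.relIndex U * (Kp ⊔ U).index = 2 ^ r₁ := by
    rw [← Subgroup.relIndex_sup_left, Subgroup.relIndex_mul_index le_sup_left, ← hr₁,
      totallyPositive_index]
  -- Since `U² ≤ U⁺ ≤ U`, Dirichlet's theorem computes `[U⁺ : U²] · [U : U⁺]`.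
  have hU2U : U2 ≤ Kp ⊓ U := by
    rintro _ ⟨u, hu, rfl⟩
    exact ⟨hsq u, pow_mem hu 2⟩
  have hbc : U2.relIndex (Kp ⊓ U) * Kp.relIndex U = 2 ^ (r₁ + r₂) := by
    rw [← Subgroup.inf_relIndex_right Kp U, Subgroup.relIndex_mul_relIndex _ _ _ hU2U inf_le_right,
      unitSquares_relIndex, rank_add_one K r₂ hr₂, hr₁]
  -- The projection `(I, δ) ↦ I` maps `Hp` onto `T`.
  let p : Hp →* (FractionalIdeal (𝓞 K)⁰ K)ˣ := (MonoidHom.fst _ _).comp Hp.subtype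
  have hp : p.range = T := by
    ext I
    rw [Subgroup.mem_comap, hPplus', powMonoidHom_apply]
    constructor
    · rintro ⟨y, rfl⟩
      exact ⟨y.1.2, ((hHp' y).1 y.2).1, ((hHp' y).1 y.2).2⟩
    · rintro ⟨δ, hδ, h⟩
      exact ⟨⟨(I, δ), (hHp' _).2 ⟨hδ, h⟩⟩, rfl⟩
  -- Totally positive units map to `Hp` by `u ↦ (1, u)`; modulo `P` their image is the group of
  -- pairs with principal first component.
  let j : (Kp ⊓ U : Subgroup Kˣ) →* Hp :=
    ((MonoidHom.inr (FractionalIdeal (𝓞 K)⁰ K)ˣ Kˣ).comp (Kp ⊓ U).subtype).codRestrict Hp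
      fun u => (hHp' _).2 ⟨u.2.1, by
        have : (u : Kˣ) ∈ π.ker := hker.symm ▸ (Subgroup.mem_inf.1 u.2).2
        simpa using this⟩
  have hj1 : ∀ u, (j u).1.1 = 1 := fun _ => rfl
  have hj2 : ∀ u, (j u).1.2 = u := fun _ => rfl
  have hQ : π.range.comap p = P ⊔ j.range := by
    apply le_antisymm
    · rintro y ⟨κ, hκ⟩
      have hy := (hHp' y).1 y.2
      change π κ = y.1.1 at hκ
      have hz : ((π κ, κ ^ 2) : (FractionalIdeal (𝓞 K)⁰ K)ˣ × Kˣ) ∈ Hp :=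
        (hHp' _).2 ⟨hsq κ, map_pow _ _ _⟩
      have hu : (κ ^ 2)⁻¹ * y.1.2 ∈ Kp ⊓ U := by
        refine Subgroup.mem_inf.2 ⟨mul_mem (inv_mem (hsq κ)) hy.1, ?_⟩
        rw [← hker, MonoidHom.mem_ker, map_mul, map_inv, map_pow, hκ, hy.2, inv_mul_cancel]
      have : y = ⟨_, hz⟩ * j ⟨_, hu⟩ := by
        apply Subtype.ext
        apply Prod.ext
        · change y.1.1 = π κ * 1
          rw [hκ, mul_one]
        · change y.1.2 = κ ^ 2 * ((κ ^ 2)⁻¹ * y.1.2)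
          rw [mul_inv_cancel_left]
      rw [this]
      exact Subgroup.mul_mem_sup ((hP' _).2 ⟨κ, rfl, rfl⟩) ⟨_, rfl⟩
    · refine sup_le ?_ ?_
      · intro y hy
        obtain ⟨κ, h, -⟩ := (hP' y).1 hy
        exact ⟨κ, h⟩
      · rintro _ ⟨u, rfl⟩
        exact ⟨1, map_one _⟩
  have hPj : P.comap j = U2.subgroupOf (Kp ⊓ U) := by
    ext u
    rw [Subgroup.mem_comap, hP', Subgroup.mem_subgroupOf, hj1, hj2]
    constructor
    · rintro ⟨κ, h1, h2⟩
      exact ⟨κ, hker ▸ h1, h2.symm⟩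
    · rintro ⟨κ, h1, h2⟩
      exact ⟨κ, by rw [← MonoidHom.mem_ker, hker]; exact h1, h2.symm⟩
  have hb : P.relIndex (π.range.comap p) = U2.relIndex (Kp ⊓ U) := by
    rw [hQ, Subgroup.relIndex_sup_left, ← Subgroup.index_comap, hPj]
    rfl
  have hPle : P ≤ π.range.comap p := hQ ▸ le_sup_left
  have hindex : P.index = U2.relIndex (Kp ⊓ U) * π.range.relIndex T := by
    rw [← Subgroup.relIndex_mul_index hPle, hb, Subgroup.index_comap, hp]
  have hc0 : Kp.relIndex U ≠ 0 := left_ne_zero_of_mul (hcd ▸ pow_ne_zero _ two_ne_zero)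
  have hbd : U2.relIndex (Kp ⊓ U) = 2 ^ r₂ * (Kp ⊔ U).index := by
    apply Nat.eq_of_mul_eq_mul_right (Nat.pos_of_ne_zero hc0)
    rw [hbc, pow_add, ← hcd]
    ring
  have hb0 : U2.relIndex (Kp ⊓ U) ≠ 0 := left_ne_zero_of_mul (hbc ▸ pow_ne_zero _ two_ne_zero)
  have hP0 : P.index ≠ 0 := hindex ▸ mul_ne_zero hb0 ha
  refine ⟨Nat.finite_of_card_ne_zero hP0, ?_⟩
  rw [hcl, ← Subgroup.relIndex_mul_relIndex _ _ _ hPr hPrT, hd, ← mul_assoc, ← hbd]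
  exact hindex
end

section
/- Let K be a number field of even degree n with signature (r₁,r₂) and ring of integers O_K, and suppose the only roots of unity in K are ±1. Let H*(O_K) be the set of equivalence classes of triples (I, ε, δ), where I is a nonzero fractional ideal of O_K, ε ∈ {±1}, and δ ∈ K^× satisfies I² = δ·O_K and N_{K/ℚ}(δ) > 0; two triples (I,ε,δ) and (I',ε',δ') are equivalent if there exists κ ∈ K^× with I = κI', ε = sgn(N_{K/ℚ}(κ))·ε', and δ = κ²δ'. Then H*(O_K) is a finite group under componentwise multiplication and |H*(O_K)| = 2^{r₁+r₂} · |Cl*(K)[2]|, where Cl*(K)[2] is the 2-torsion subgroup of the oriented class group of K. -/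
open NumberField FractionalIdeal
open scoped nonZeroDivisors

/-!
Write `U = (𝓞 K)ˣ` and let `U⁺` be the group of units of norm `1`.  Forgetting `δ` gives a
homomorphism `H* → Cl*(K)`, `(I, ε, δ) ↦ [(I, ε)]`.  Its image is exactly `Cl*(K)[2]`, because
`(I, ε)² = (I², 1)` is a principal oriented ideal iff `I² = (δ)` for some `δ` of positive norm.
Its kernel is generated by `P*` and the triples `(1, 1, u)` with `u ∈ U⁺`, and `(1, 1, u)` lies in
`P*` iff `u` is the square of an element of `U⁺`.  Hence
`[H* : P*] = [U⁺ : (U⁺)²] · |Cl*(K)[2]|`.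

To compute `[U⁺ : (U⁺)²]`, note that `-1` has norm `1` because the degree is even, so the kernel
`{±1}` of squaring on `U` lies in `U⁺`.  Comparing indices along the squaring map gives
`[U⁺ : (U⁺)²] = [U : U²]` (`index_squares_ker_unitNorm`), and `[U : U²] = 2 ^ (r₁ + r₂)` by
Dirichlet's unit theorem and the hypothesis on roots of unity (`index_unit_squares`,
`rank_add_one_eq`).  Finiteness follows from that of `Cl*(K)` (`finite_orientedClassGroup`).
-/

/-! ### Units modulo squares -/

/-- The norm `(𝓞 K)ˣ → ℤˣ = {±1}` on units. -/
noncomputable def unitNorm (K : Type) [Field K] [NumberField K] : (𝓞 K)ˣ →* ℤˣ :=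
  Units.map (Algebra.norm ℤ : 𝓞 K →* ℤ)

lemma mem_ker_unitNorm {K : Type} [Field K] [NumberField K] (u : (𝓞 K)ˣ) :
    u ∈ (unitNorm K).ker ↔ 0 < Algebra.norm ℚ (u : K) := by
  rw [MonoidHom.mem_ker]
  have h : Algebra.norm ℚ ((u : 𝓞 K) : K) = ((unitNorm K u : ℤˣ) : ℤ) :=
    (Algebra.coe_norm_int (u : 𝓞 K)).symm
  rw [h]
  rcases Int.units_eq_one_or (unitNorm K u) with h | h <;> simp [h]

/-- The exponent vector of a unit with respect to the fundamental system of units. -/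
noncomputable def unitExponents {K : Type} [Field K] [NumberField K] (u : (𝓞 K)ˣ) :
    Fin (Units.rank K) → ℤ :=
  (Units.exist_unique_eq_mul_prod K u).choose.2

lemma unitExponents_eq {K : Type} [Field K] [NumberField K] {u ζ : (𝓞 K)ˣ}
    {e : Fin (Units.rank K) → ℤ} (hζ : ζ ∈ Units.torsion K)
    (h : u = ζ * ∏ i, Units.fundSystem K i ^ e i) : unitExponents u = e :=
  congrArg Prod.snd ((Units.exist_unique_eq_mul_prod K u).choose_spec.2 (⟨ζ, hζ⟩, e) h).symm

lemma exists_eq_mul_prod_unitExponents {K : Type} [Field K] [NumberField K] (u : (𝓞 K)ˣ) :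
    ∃ ζ ∈ Units.torsion K, u = ζ * ∏ i, Units.fundSystem K i ^ unitExponents u i :=
  ⟨_, (Units.exist_unique_eq_mul_prod K u).choose.1.2,
    (Units.exist_unique_eq_mul_prod K u).choose_spec.1⟩

lemma unitExponents_mul {K : Type} [Field K] [NumberField K] (u v : (𝓞 K)ˣ) :
    unitExponents (u * v) = unitExponents u + unitExponents v := by
  obtain ⟨ζ, hζ, hu⟩ := exists_eq_mul_prod_unitExponents u
  obtain ⟨ξ, hξ, hv⟩ := exists_eq_mul_prod_unitExponents v
  refine unitExponents_eq (mul_mem hζ hξ) ?_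
  simp only [Pi.add_apply, zpow_add, Finset.prod_mul_distrib]
  rw [mul_mul_mul_comm, ← hu, ← hv]

/-- The exponent vector of a unit with respect to the fundamental system, modulo `2`. -/
noncomputable def unitExponentsModTwo (K : Type) [Field K] [NumberField K] :
    (𝓞 K)ˣ →* Multiplicative (Fin (Units.rank K) → ZMod 2) :=
  MonoidHom.mk' (fun u ↦ Multiplicative.ofAdd fun i ↦ (unitExponents u i : ZMod 2)) fun u v ↦ by
    apply Multiplicative.toAdd.injective
    funext i
    simp [unitExponents_mul]

lemma unitExponentsModTwo_apply {K : Type} [Field K] [NumberField K] (u : (𝓞 K)ˣ)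
    (i : Fin (Units.rank K)) :
    (unitExponentsModTwo K u).toAdd i = (unitExponents u i : ZMod 2) :=
  rfl

lemma unitExponentsModTwo_surjective (K : Type) [Field K] [NumberField K] :
    Function.Surjective (unitExponentsModTwo K) := by
  intro v
  refine ⟨∏ i, Units.fundSystem K i ^ ((v.toAdd i).val : ℤ), ?_⟩
  apply Multiplicative.toAdd.injective
  funext i
  rw [unitExponentsModTwo_apply, unitExponents_eq (one_mem _) (one_mul _).symm]
  simp

lemma ker_unitExponentsModTwo (K : Type) [Field K] [NumberField K] :
    (unitExponentsModTwo K).ker =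
      Units.torsion K ⊔ (powMonoidHom 2 : (𝓞 K)ˣ →* (𝓞 K)ˣ).range := by
  apply le_antisymm
  · intro u hu
    obtain ⟨ζ, hζ, h⟩ := exists_eq_mul_prod_unitExponents u
    have h2 : ∀ i, ∃ c : ℤ, unitExponents u i = c * 2 := by
      intro i
      have := congrFun (congrArg Multiplicative.toAdd (MonoidHom.mem_ker.mp hu)) i
      rw [unitExponentsModTwo_apply] at this
      obtain ⟨c, hc⟩ := (ZMod.intCast_zmod_eq_zero_iff_dvd _ 2).mp this
      exact ⟨c, by rw [hc, mul_comm]; rfl⟩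
    choose c hc using h2
    rw [h]
    refine Subgroup.mul_mem_sup hζ ⟨∏ i, Units.fundSystem K i ^ c i, ?_⟩
    simp only [powMonoidHom_apply, hc, zpow_mul, ← Finset.prod_pow]
    rfl
  · refine sup_le (fun u hu ↦ ?_) ?_
    · apply Multiplicative.toAdd.injective
      funext i
      rw [unitExponentsModTwo_apply, unitExponents_eq (e := 0) hu (by simp)]
      simp
    · rintro _ ⟨u, rfl⟩
      apply Multiplicative.toAdd.injective
      funext i
      simp only [powMonoidHom_apply, map_pow, toAdd_pow, Pi.smul_apply, toAdd_one, Pi.zero_apply]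
      generalize (unitExponentsModTwo K u).toAdd i = z
      exact (by decide : ∀ z : ZMod 2, 2 • z = 0) z

lemma mem_torsion_iff_eq_one_or_neg_one {K : Type} [Field K] [NumberField K]
    (hroots : ∀ x : K, (∃ k : ℕ, 0 < k ∧ x ^ k = 1) → x = 1 ∨ x = -1) (u : (𝓞 K)ˣ) :
    u ∈ Units.torsion K ↔ u = 1 ∨ u = -1 := by
  constructor
  · intro h
    obtain ⟨k, hk, h⟩ := isOfFinOrder_iff_pow_eq_one.mp ((CommGroup.mem_torsion u).mp h)
    have := hroots (u : K) ⟨k, hk, by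
      have := congrArg (fun v : (𝓞 K)ˣ ↦ ((v : 𝓞 K) : K)) h
      simpa using this⟩
    refine this.imp (fun h ↦ ?_) (fun h ↦ ?_) <;> ext <;> simpa using h
  · rintro (rfl | rfl)
    · exact one_mem _
    · exact (CommGroup.mem_torsion _).mpr (isOfFinOrder_iff_pow_eq_one.mpr ⟨2, by simp⟩)

lemma index_unit_squares {K : Type} [Field K] [NumberField K]
    (hroots : ∀ x : K, (∃ k : ℕ, 0 < k ∧ x ^ k = 1) → x = 1 ∨ x = -1) :
    (powMonoidHom 2 : (𝓞 K)ˣ →* (𝓞 K)ˣ).range.index = 2 ^ (Units.rank K + 1) := by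
  set S := (powMonoidHom 2 : (𝓞 K)ˣ →* (𝓞 K)ˣ).range with hS
  have h1 : S ≤ (unitExponentsModTwo K).ker := by
    rw [ker_unitExponentsModTwo]; exact le_sup_right
  have hne : (1 : (𝓞 K)ˣ) ≠ -1 := by
    intro h
    have := congrArg (fun v : (𝓞 K)ˣ ↦ ((v : 𝓞 K) : K)) h
    norm_num at this
  have hcard : Nat.card (Units.torsion K) = 2 := by
    have : ((Units.torsion K : Set (𝓞 K)ˣ)) = {1, -1} := by
      ext u; simpa using mem_torsion_iff_eq_one_or_neg_one hroots u
    rw [← SetLike.coe_sort_coe, this, Nat.card_coe_set_eq, Set.ncard_pair hne]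
  -- A square that is a root of unity is the square of a root of unity, hence `1`.
  have hbot : S ⊓ Units.torsion K = ⊥ := by
    rw [eq_bot_iff]
    rintro _ ⟨⟨u, rfl⟩, hu⟩
    have hu' : u ∈ Units.torsion K := by
      have h := (CommGroup.mem_torsion _).mp hu
      rw [powMonoidHom_apply, isOfFinOrder_pow] at h
      exact (CommGroup.mem_torsion _).mpr (h.resolve_right two_ne_zero)
    rcases (mem_torsion_iff_eq_one_or_neg_one hroots u).mp hu' with rfl | rfl <;> simp
  rw [← Subgroup.relIndex_mul_index h1, Subgroup.index_ker,
    MonoidHom.range_eq_top.mpr (unitExponentsModTwo_surjective K), ker_unitExponentsModTwo,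
    ← hS, Subgroup.relIndex_sup_right, ← Subgroup.inf_relIndex_right, hbot,
    Subgroup.relIndex_bot_left, hcard, Subgroup.card_top]
  simp [pow_succ, mul_comm]

/-- Squaring on `(𝓞 K)ˣ` has kernel `{±1}`, which consists of units of norm `1` because the degree
is even; so the units of norm `1` have as many square classes as all the units. -/
lemma index_squares_ker_unitNorm {K : Type} [Field K] [NumberField K]
    (heven : Even (Module.finrank ℚ K))
    (hroots : ∀ x : K, (∃ k : ℕ, 0 < k ∧ x ^ k = 1) → x = 1 ∨ x = -1) :
    (powMonoidHom 2 : (unitNorm K).ker →* (unitNorm K).ker).range.index =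
      2 ^ (Units.rank K + 1) := by
  set V := (unitNorm K).ker with hV
  have hker : (powMonoidHom 2 : (𝓞 K)ˣ →* (𝓞 K)ˣ).ker ≤ V := by
    intro u hu
    have hu' : u ∈ Units.torsion K :=
      (CommGroup.mem_torsion _).mpr (isOfFinOrder_iff_pow_eq_one.mpr ⟨2, by simp, hu⟩)
    rcases (mem_torsion_iff_eq_one_or_neg_one hroots u).mp hu' with rfl | rfl
    · exact one_mem _
    · rw [mem_ker_unitNorm]
      have : algebraMap (𝓞 K) K ((-1 : (𝓞 K)ˣ) : 𝓞 K) = algebraMap ℚ K (-1) := by simp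
      rw [this, Algebra.norm_algebraMap, heven.neg_one_pow]
      exact one_pos
  have h0 : V.index ≠ 0 := by
    rw [hV, Subgroup.index_ker]; exact Nat.card_pos.ne'
  have h1 := Subgroup.index_map V (powMonoidHom 2 : (𝓞 K)ˣ →* (𝓞 K)ˣ)
  have h2 : V.map (powMonoidHom 2 : (𝓞 K)ˣ →* (𝓞 K)ˣ) =
      ((powMonoidHom 2 : V →* V).range).map V.subtype := by
    rw [MonoidHom.map_range]
    ext x
    simp [Subgroup.mem_map]
  rw [h2, Subgroup.index_map_subtype, sup_eq_left.mpr hker, index_unit_squares hroots,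
    mul_comm] at h1
  exact Nat.eq_of_mul_eq_mul_left (Nat.pos_of_ne_zero h0) h1

/-! ### The signature and the unit rank -/

lemma rank_add_one_eq {K : Type} [Field K] [NumberField K] {r₁ r₂ : ℕ}
    (hr₁ : Nat.card (K →+* ℝ) = r₁)
    (hr₂ : Nat.card {φ : K →+* ℂ // ∃ x, (φ x).im ≠ 0} = 2 * r₂) :
    Units.rank K + 1 = r₁ + r₂ := by
  classical
  have hreal (φ : K →+* ℂ) : ComplexEmbedding.IsReal φ ↔ ∀ x, (φ x).im = 0 := by
    rw [ComplexEmbedding.isReal_iff, RingHom.ext_iff]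
    simp [ComplexEmbedding.conjugate_coe_eq, Complex.conj_eq_iff_im]
  have e : (K →+* ℝ) ≃ {φ : K →+* ℂ // ComplexEmbedding.IsReal φ} :=
    { toFun := fun ψ ↦ ⟨Complex.ofRealHom.comp ψ, by rw [hreal]; simp⟩
      invFun := fun φ ↦ φ.2.embedding
      left_inv := fun ψ ↦ by
        ext x
        apply Complex.ofReal_injective
        rw [ComplexEmbedding.IsReal.coe_embedding_apply]; rfl
      right_inv := fun φ ↦ by
        ext x
        exact ComplexEmbedding.IsReal.coe_embedding_apply φ.2 x }
  have h1 : InfinitePlace.nrRealPlaces K = r₁ := by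
    rw [← hr₁, Nat.card_congr e, Nat.card_eq_fintype_card, InfinitePlace.card_real_embeddings]
  have h2 : InfinitePlace.nrComplexPlaces K = r₂ := by
    have : Nat.card {φ : K →+* ℂ // ¬ ComplexEmbedding.IsReal φ} = 2 * r₂ := by
      rw [← hr₂]
      exact Nat.card_congr (Equiv.subtypeEquivRight fun φ ↦ by rw [hreal]; push Not; rfl)
    rw [Nat.card_eq_fintype_card, InfinitePlace.card_complex_embeddings] at this
    omega
  rw [Units.rank, Nat.sub_add_cancel Fintype.card_pos,
    InfinitePlace.card_eq_nrRealPlaces_add_nrComplexPlaces, h1, h2]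

/-! ### Oriented ideals -/

lemma spanSingleton_eq_one_iff {K : Type} [Field K] [NumberField K] (κ : K) :
    spanSingleton (𝓞 K)⁰ κ = 1 ↔ ∃ u : (𝓞 K)ˣ, algebraMap (𝓞 K) K u = κ := by
  rw [← spanSingleton_one, eq_comm, spanSingleton_eq_spanSingleton]
  refine exists_congr fun u ↦ ?_
  rw [Units.smul_def, Algebra.smul_def, mul_one]

/-- The oriented class group is finite: it is an extension of a subgroup of the class group by a
quotient of `ℤˣ`. -/
lemma finite_orientedClassGroup {K : Type} [Field K] [NumberField K]
    (Pori : Subgroup ((FractionalIdeal (𝓞 K)⁰ K)ˣ × ℤˣ))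
    (hPori : ∀ x : (FractionalIdeal (𝓞 K)⁰ K)ˣ × ℤˣ, x ∈ Pori ↔ ∃ α : Kˣ,
      (x.1 : FractionalIdeal (𝓞 K)⁰ K) = spanSingleton (𝓞 K)⁰ (α : K) ∧
      ((0 < Algebra.norm ℚ (α : K) ∧ x.2 = 1) ∨
        (Algebra.norm ℚ (α : K) < 0 ∧ x.2 = -1))) :
    Finite (((FractionalIdeal (𝓞 K)⁰ K)ˣ × ℤˣ) ⧸ Pori) := by
  let C : Subgroup (FractionalIdeal (𝓞 K)⁰ K)ˣ := (toPrincipalIdeal (𝓞 K) K).range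
  let h : (FractionalIdeal (𝓞 K)⁰ K)ˣ × ℤˣ →* (FractionalIdeal (𝓞 K)⁰ K)ˣ ⧸ C :=
    (QuotientGroup.mk' C).comp (MonoidHom.fst _ _)
  have : Finite ((FractionalIdeal (𝓞 K)⁰ K)ˣ ⧸ C) :=
    Finite.of_equiv _ (ClassGroup.equiv (R := 𝓞 K) K).toEquiv
  let j : ℤˣ →* (FractionalIdeal (𝓞 K)⁰ K)ˣ × ℤˣ := MonoidHom.inr _ _
  have hker (x) : x ∈ h.ker ↔ ∃ α : Kˣ,
      (x.1 : FractionalIdeal (𝓞 K)⁰ K) = spanSingleton (𝓞 K)⁰ (α : K) := by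
    rw [MonoidHom.mem_ker]
    change (QuotientGroup.mk x.1 : (FractionalIdeal (𝓞 K)⁰ K)ˣ ⧸ C) = 1 ↔ _
    rw [QuotientGroup.eq_one_iff]
    rw [MonoidHom.mem_range]
    exact exists_congr fun α ↦ toPrincipalIdeal_eq_iff.trans eq_comm
  have hle : Pori ≤ h.ker := fun x hx ↦ by
    obtain ⟨α, hα, -⟩ := (hPori x).mp hx
    exact (hker x).mpr ⟨α, hα⟩
  have hsup : h.ker = j.range ⊔ Pori := by
    refine le_antisymm (fun x hx ↦ ?_) (sup_le ?_ hle)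
    · obtain ⟨α, hα⟩ := (hker x).mp hx
      have hN : Algebra.norm ℚ (α : K) ≠ 0 := Algebra.norm_ne_zero_iff.mpr α.ne_zero
      obtain ⟨s, hs⟩ : ∃ s : ℤˣ, (0 < Algebra.norm ℚ (α : K) ∧ s = 1) ∨
          (Algebra.norm ℚ (α : K) < 0 ∧ s = -1) := by
        rcases hN.lt_or_gt with h | h
        · exact ⟨-1, Or.inr ⟨h, rfl⟩⟩
        · exact ⟨1, Or.inl ⟨h, rfl⟩⟩
      have hx' : x = j (x.2 * s⁻¹) * (x.1, s) := by
        exact Prod.ext (one_mul _).symm (inv_mul_cancel_right _ _).symm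
      rw [hx']
      exact Subgroup.mul_mem_sup ⟨_, rfl⟩ ((hPori _).mpr ⟨α, hα, hs⟩)
    · rintro _ ⟨s, rfl⟩
      exact (hker _).mpr ⟨1, by simp [j]⟩
  refine (Subgroup.fintypeOfIndexNeZero ?_).finite
  rw [← Subgroup.relIndex_mul_index hle, Subgroup.index_ker, hsup, Subgroup.relIndex_sup_right,
    ← Subgroup.index_comap]
  exact mul_ne_zero Subgroup.FiniteIndex.index_ne_zero Nat.card_pos.ne'

/-- **Parametrisation of 2-torsion in the oriented class group.**
Let `K` be a number field of even degree `n` and signature `(r₁, r₂)` whose only roots of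
unity are `±1`.  Let `H*` be the group of triples `(I, ε, δ)` with `I` an invertible
fractional ideal of `O_K`, `ε = ±1`, and `δ ∈ K^×` with `I² = δ·O_K` and `N(δ) > 0`; let
`P* ≤ H*` be the subgroup of triples `(κ·O_K, sgn N(κ), κ²)` for `κ ∈ K^×` (so
`H*(O_K) = H*/P*`); and let the oriented class group `Cl*(K)` be the group of pairs
`(I, ε)` modulo the principal oriented ideals `(α·O_K, sgn N(α))`.  Then `H*/P*` is a
finite group and `|H*/P*| = 2^(r₁+r₂) · |Cl*(K)[2]|`. -/
theorem Hstar_card_eq_two_torsion_oriented_class_group (n r₁ r₂ : ℕ) (hn_even : Even n)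
    (hn : 0 < n) (K : Type) [Field K] [NumberField K]
    (hdeg : Module.finrank ℚ K = n)
    (hr₁ : Nat.card (K →+* ℝ) = r₁)
    (hr₂ : Nat.card {φ : K →+* ℂ // ∃ x, (φ x).im ≠ 0} = 2 * r₂)
    (hroots : ∀ x : K, (∃ k : ℕ, 0 < k ∧ x ^ k = 1) → x = 1 ∨ x = -1)
    (Hst : Subgroup ((FractionalIdeal (𝓞 K)⁰ K)ˣ × ℤˣ × Kˣ))
    (hHst : ∀ x : (FractionalIdeal (𝓞 K)⁰ K)ˣ × ℤˣ × Kˣ, x ∈ Hst ↔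
      (x.1 : FractionalIdeal (𝓞 K)⁰ K) ^ 2 = spanSingleton (𝓞 K)⁰ (x.2.2 : K) ∧
      0 < Algebra.norm ℚ (x.2.2 : K))
    (Pst : Subgroup Hst)
    (hPst : ∀ y : Hst, y ∈ Pst ↔ ∃ κ : Kˣ,
      ((y : (FractionalIdeal (𝓞 K)⁰ K)ˣ × ℤˣ × Kˣ).1 : FractionalIdeal (𝓞 K)⁰ K) =
        spanSingleton (𝓞 K)⁰ (κ : K) ∧
      ((0 < Algebra.norm ℚ (κ : K) ∧ (y : (FractionalIdeal (𝓞 K)⁰ K)ˣ × ℤˣ × Kˣ).2.1 = 1) ∨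
        (Algebra.norm ℚ (κ : K) < 0 ∧
          (y : (FractionalIdeal (𝓞 K)⁰ K)ˣ × ℤˣ × Kˣ).2.1 = -1)) ∧
      (y : (FractionalIdeal (𝓞 K)⁰ K)ˣ × ℤˣ × Kˣ).2.2 = κ ^ 2)
    (Pori : Subgroup ((FractionalIdeal (𝓞 K)⁰ K)ˣ × ℤˣ))
    (hPori : ∀ x : (FractionalIdeal (𝓞 K)⁰ K)ˣ × ℤˣ, x ∈ Pori ↔ ∃ α : Kˣ,
      (x.1 : FractionalIdeal (𝓞 K)⁰ K) = spanSingleton (𝓞 K)⁰ (α : K) ∧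
      ((0 < Algebra.norm ℚ (α : K) ∧ x.2 = 1) ∨
        (Algebra.norm ℚ (α : K) < 0 ∧ x.2 = -1))) :
    Finite (Hst ⧸ Pst) ∧
    Nat.card (Hst ⧸ Pst) =
      2 ^ (r₁ + r₂) *
        Nat.card {c : ((FractionalIdeal (𝓞 K)⁰ K)ˣ × ℤˣ) ⧸ Pori // c ^ 2 = 1} := by
  classical
  have hfinQ := finite_orientedClassGroup Pori hPori
  -- The forgetful homomorphism `(I, ε, δ) ↦ [(I, ε)]`.
  let f : Hst →* ((FractionalIdeal (𝓞 K)⁰ K)ˣ × ℤˣ) ⧸ Pori :=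
    (QuotientGroup.mk' Pori).comp
      (((MonoidHom.fst _ _).prod ((MonoidHom.fst _ _).comp (MonoidHom.snd _ _))).comp Hst.subtype)
  have hf (y : Hst) : f y = QuotientGroup.mk (y.1.1, y.1.2.1) := rfl
  -- Its image is the whole `2`-torsion, since `(I, ε)² = (I², 1)`.
  have hrange : (f.range : Set (((FractionalIdeal (𝓞 K)⁰ K)ˣ × ℤˣ) ⧸ Pori)) =
      {c | c ^ 2 = 1} := by
    ext c
    constructor
    · rintro ⟨y, rfl⟩
      obtain ⟨h1, h2⟩ := (hHst y.1).mp y.2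
      rw [Set.mem_ofPred_eq, hf, ← QuotientGroup.mk_pow, QuotientGroup.eq_one_iff, hPori]
      exact ⟨y.1.2.2, by simpa using h1, Or.inl ⟨h2, by simp⟩⟩
    · intro hc
      obtain ⟨⟨I, ε⟩, rfl⟩ := QuotientGroup.mk_surjective c
      rw [Set.mem_ofPred_eq, ← QuotientGroup.mk_pow, QuotientGroup.eq_one_iff, hPori] at hc
      obtain ⟨α, h1, h2⟩ := hc
      have h3 : 0 < Algebra.norm ℚ (α : K) := by
        rcases h2 with h2 | h2
        · exact h2.1
        · have h4 := h2.2
          rw [Prod.pow_snd, Int.units_sq] at h4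
          exact absurd h4 (by decide)
      exact ⟨⟨(I, ε, α), (hHst _).mpr ⟨by simpa using h1, h3⟩⟩, rfl⟩
  -- Units of norm `1` embed in `H*` as `u ↦ (1, 1, u)`.
  let g : (unitNorm K).ker →* Hst :=
    { toFun := fun u ↦ ⟨(1, 1, Units.map (algebraMap (𝓞 K) K).toMonoidHom u.1), (hHst _).mpr
        ⟨by
          rw [Units.val_one, one_pow, eq_comm, spanSingleton_eq_one_iff]
          exact ⟨u.1, rfl⟩, (mem_ker_unitNorm u.1).mp u.2⟩⟩
      map_one' := by ext1; simp
      map_mul' := fun u v ↦ by ext1; simp }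
  have hle : Pst ≤ f.ker := fun y hy ↦ by
    obtain ⟨κ, h1, h2, -⟩ := (hPst y).mp hy
    rw [MonoidHom.mem_ker, hf, QuotientGroup.eq_one_iff, hPori]
    exact ⟨κ, h1, h2⟩
  have hker : f.ker = g.range ⊔ Pst := by
    refine le_antisymm (fun y hy ↦ ?_) (sup_le ?_ hle)
    · rw [MonoidHom.mem_ker, hf, QuotientGroup.eq_one_iff, hPori] at hy
      obtain ⟨κ, h1, h2⟩ := hy
      obtain ⟨h3, h4⟩ := (hHst y.1).mp y.2
      dsimp only at h1 h2
      -- `δ = u κ²` with `u` a unit of positive norm.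
      have h5 : spanSingleton (𝓞 K)⁰ ((κ : K) ^ 2) = spanSingleton (𝓞 K)⁰ (y.1.2.2 : K) := by
        rw [← h3, h1, spanSingleton_pow]
      obtain ⟨u, hu⟩ := spanSingleton_eq_spanSingleton.mp h5
      rw [Units.smul_def, Algebra.smul_def] at hu
      have hu1 : u ∈ (unitNorm K).ker := by
        rw [mem_ker_unitNorm]
        rw [← hu, map_mul, map_pow] at h4
        exact pos_of_mul_pos_left h4 (sq_nonneg _)
      have hp : (y.1.1, y.1.2.1, κ ^ 2) ∈ Hst := (hHst _).mpr
        ⟨by rw [h3, ← h5]; simp, by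
          rw [Units.val_pow_eq_pow_val, map_pow]
          exact sq_pos_of_ne_zero (Algebra.norm_ne_zero_iff.mpr κ.ne_zero)⟩
      have hy' : y = g ⟨u, hu1⟩ * ⟨_, hp⟩ := by
        apply Subtype.ext
        refine Prod.ext (one_mul _).symm (Prod.ext (one_mul _).symm (Units.ext hu.symm))
      rw [hy']
      exact Subgroup.mul_mem_sup ⟨_, rfl⟩ ((hPst _).mpr ⟨κ, h1, h2, rfl⟩)
    · rintro _ ⟨u, rfl⟩
      exact (QuotientGroup.eq_one_iff _).mpr (one_mem Pori)
  -- `(1, 1, u)` is principal exactly when `u` is the square of a unit of norm `1`.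
  have hcomap : Pst.comap g =
      (powMonoidHom 2 : (unitNorm K).ker →* (unitNorm K).ker).range := by
    ext u
    rw [Subgroup.mem_comap, hPst]
    constructor
    · rintro ⟨κ, h1, h2, h3⟩
      obtain ⟨v, hv⟩ := (spanSingleton_eq_one_iff (κ : K)).mp h1.symm
      have hN : 0 < Algebra.norm ℚ (κ : K) := by
        rcases h2 with h2 | h2
        · exact h2.1
        · exact absurd h2.2 (by change ¬ ((1 : ℤˣ) = -1); decide)
      refine ⟨⟨v, (mem_ker_unitNorm v).mpr (by rwa [hv])⟩, ?_⟩
      apply Subtype.ext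
      apply Units.ext
      apply RingOfIntegers.coe_injective
      have h4 : algebraMap (𝓞 K) K (u.1 : 𝓞 K) = (κ : K) ^ 2 := congrArg Units.val h3
      simp [h4, ← hv]
    · rintro ⟨v, rfl⟩
      refine ⟨Units.map (algebraMap (𝓞 K) K).toMonoidHom v.1, ?_,
        Or.inl ⟨(mem_ker_unitNorm v.1).mp v.2, rfl⟩, ?_⟩
      · exact ((spanSingleton_eq_one_iff _).mpr ⟨v.1, rfl⟩).symm
      · exact map_pow (Units.map (algebraMap (𝓞 K) K).toMonoidHom) v.1 2
  have hindex : Pst.index = 2 ^ (r₁ + r₂) *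
      Nat.card {c : ((FractionalIdeal (𝓞 K)⁰ K)ˣ × ℤˣ) ⧸ Pori // c ^ 2 = 1} := by
    rw [← Subgroup.relIndex_mul_index hle, Subgroup.index_ker, hker, Subgroup.relIndex_sup_right,
      ← Subgroup.index_comap, hcomap,
      index_squares_ker_unitNorm (hdeg ▸ hn_even) hroots, rank_add_one_eq hr₁ hr₂]
    congr 1
    exact Nat.card_congr (Equiv.setCongr hrange)
  have : Nonempty {c : ((FractionalIdeal (𝓞 K)⁰ K)ˣ × ℤˣ) ⧸ Pori // c ^ 2 = 1} :=
    ⟨⟨1, one_pow 2⟩⟩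
  refine ⟨(Subgroup.fintypeOfIndexNeZero ?_).finite, hindex⟩
  rw [hindex]
  exact mul_ne_zero (by positivity) Nat.card_pos.ne'
end

section
/- Let n be a positive even integer and let A, B be symmetric n×n matrices over ℚ such that the polynomial f(x) = (−1)^{n/2}·det(x·A − B) has degree n and is irreducible over ℚ. Then the stabiliser of the pair (A,B) under the action of SL_n(ℚ) given by γ·(A,B) = (γᵀAγ, γᵀBγ) is exactly {Iₙ, −Iₙ}. -/
/-!
Put `T = A⁻¹ B`. The resolvent is a nonzero constant times the characteristic polynomial of `T`,
so `T` has irreducible characteristic polynomial and `ℚ[T]` is a field of degree `n`.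

If `γ` fixes both `A` and `B`, then `γ` commutes with `T`. A nonzero vector is cyclic for `T`
(`exists_aeval_mulVec_eq`), so everything commuting with `T` is a polynomial in `T`
(`exists_aeval_eq_of_commute`). By symmetry of `A` and `B`, the operator `T` is self-adjoint for `A`,
hence so is `γ = p(T)`, and `A = γᵀ A γ = A γ²` gives `γ² = 1`. In the field `ℚ[T]` this forces
`γ = ±1`. The converse holds because `-1` acts trivially on pairs of forms.
-/

open Polynomial
open scoped Matrix

section CyclicCentralizer

variable {n : ℕ} {K : Type*} [Field K]

/-- The ring `K[T]` is a field when the characteristic polynomial of `T` is irreducible. -/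
lemma aeval_eq_zero_or_exists_left_inverse {T : Matrix (Fin n) (Fin n) K}
    (hT : Irreducible T.charpoly) (p : K[X]) :
    aeval T p = 0 ∨ ∃ u : K[X], aeval T u * aeval T p = 1 := by
  by_cases h : T.charpoly ∣ p
  · left
    obtain ⟨q, rfl⟩ := h
    simp [Matrix.aeval_self_charpoly]
  · right
    obtain ⟨a, b, hab⟩ := (hT.coprime_iff_not_dvd).2 h
    refine ⟨b, ?_⟩
    have := congrArg (aeval T) hab
    simpa [Matrix.aeval_self_charpoly] using this

/-- Every nonzero vector is cyclic for a matrix with irreducible characteristic polynomial. -/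
lemma exists_aeval_mulVec_eq {T : Matrix (Fin n) (Fin n) K}
    (hT : Irreducible T.charpoly) {v : Fin n → K} (hv : v ≠ 0) (w : Fin n → K) :
    ∃ p : K[X], aeval T p *ᵥ v = w := by
  let φ : degreeLT K n →ₗ[K] (Fin n → K) :=
    { toFun := fun p => aeval T (p : K[X]) *ᵥ v
      map_add' := fun p q => by simp [Matrix.add_mulVec]
      map_smul' := fun c p => by simp [Matrix.smul_mulVec] }
  have hinj : Function.Injective φ := by
    rw [← LinearMap.ker_eq_bot, LinearMap.ker_eq_bot']
    rintro ⟨p, hp⟩ h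
    change aeval T p *ᵥ v = 0 at h
    have hdvd : T.charpoly ∣ p := by
      by_contra hnd
      obtain ⟨a, b, hab⟩ := (hT.coprime_iff_not_dvd).2 hnd
      have h1 : aeval T b * aeval T p = 1 := by
        simpa [Matrix.aeval_self_charpoly] using congrArg (aeval T) hab
      apply hv
      rw [← Matrix.one_mulVec v, ← h1, ← Matrix.mulVec_mulVec, h, Matrix.mulVec_zero]
    have hp0 : p = 0 := by
      refine eq_zero_of_dvd_of_degree_lt hdvd ?_
      rw [Matrix.charpoly_degree_eq_dim, Fintype.card_fin]
      exact mem_degreeLT.1 hp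
    exact Subtype.ext hp0
  have hfin : Module.finrank K (degreeLT K n) = Module.finrank K (Fin n → K) :=
    (degreeLTEquiv K n).finrank_eq
  have : FiniteDimensional K (degreeLT K n) :=
    Module.Finite.equiv (degreeLTEquiv K n).symm
  obtain ⟨p, hp⟩ := (LinearMap.injective_iff_surjective_of_finrank_eq_finrank hfin).1 hinj w
  exact ⟨p, hp⟩

lemma exists_aeval_eq_of_commute {T G : Matrix (Fin n) (Fin n) K} (hn : 0 < n)
    (hT : Irreducible T.charpoly) (hG : Commute G T) :
    ∃ p : K[X], aeval T p = G := by
  have hv : (Pi.single ⟨0, hn⟩ 1 : Fin n → K) ≠ 0 := by simp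
  obtain ⟨p, hp⟩ := exists_aeval_mulVec_eq hT hv (G *ᵥ Pi.single ⟨0, hn⟩ 1)
  refine ⟨p, ?_⟩
  apply Matrix.mulVec_injective
  funext w
  -- Both sides commute with `K[T]` and agree on the cyclic vector.
  obtain ⟨q, rfl⟩ := exists_aeval_mulVec_eq hT hv w
  have hGq : G * aeval T q = aeval T q * G := by
    induction q using Polynomial.induction_on' with
    | add a b ha hb => simp [mul_add, add_mul, ha, hb]
    | monomial k c =>
      simp only [aeval_monomial]
      exact Commute.mul_right (Algebra.commutes c G).symm (hG.pow_right k)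
  rw [Matrix.mulVec_mulVec, Matrix.mulVec_mulVec, hGq, ← map_mul, mul_comm, map_mul,
    ← Matrix.mulVec_mulVec, hp, Matrix.mulVec_mulVec]

end CyclicCentralizer

/-- A polynomial in an operator self-adjoint for `A` is self-adjoint for `A`. -/
lemma transpose_aeval_mul {n : ℕ} {A T : Matrix (Fin n) (Fin n) ℚ} (h : Tᵀ * A = A * T)
    (p : ℚ[X]) : (aeval T p)ᵀ * A = A * aeval T p := by
  induction p using Polynomial.induction_on' with
  | add a b ha hb => simp [mul_add, add_mul, ha, hb]
  | monomial k c =>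
    have hk : (T ^ k)ᵀ * A = A * T ^ k := by
      rw [Matrix.transpose_pow]
      exact (SemiconjBy.pow_right (show SemiconjBy A T Tᵀ from h.symm) k).symm
    rw [aeval_monomial, ← Algebra.smul_def, Matrix.transpose_smul, Matrix.smul_mul, hk,
      Matrix.mul_smul]

/-- **The stabiliser of a pair with irreducible resolvent is `{±1}`.**
Let `n` be a positive even integer and `A`, `B` symmetric `n × n` rational matrices such
that the resolvent polynomial `f(x) = (−1)^(n/2) · det (x·A − B)` has degree `n` and is
irreducible over `ℚ`.  Then the stabiliser of `(A, B)` in `SL_n(ℚ)` (acting by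
`γ · (A,B) = (γᵀAγ, γᵀBγ)`) is exactly `{1, −1}`. -/
theorem stabiliser_of_irreducible_resolvent_eq_pm_one
    (n : ℕ) (hn : 0 < n) (hn_even : Even n)
    (A B : Matrix (Fin n) (Fin n) ℚ) (hA : A.IsSymm) (hB : B.IsSymm)
    (hdeg : ((-1 : Polynomial ℚ) ^ (n / 2) *
      ((X : Polynomial ℚ) • A.map (fun a => C a) - B.map (fun a => C a)).det).natDegree = n)
    (hirr : Irreducible ((-1 : Polynomial ℚ) ^ (n / 2) *
      ((X : Polynomial ℚ) • A.map (fun a => C a) - B.map (fun a => C a)).det)) :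
    ∀ γ : Matrix.SpecialLinearGroup (Fin n) ℚ,
      ((γ : Matrix (Fin n) (Fin n) ℚ)ᵀ * A * (γ : Matrix (Fin n) (Fin n) ℚ) = A ∧
        (γ : Matrix (Fin n) (Fin n) ℚ)ᵀ * B * (γ : Matrix (Fin n) (Fin n) ℚ) = B) ↔
      ((γ : Matrix (Fin n) (Fin n) ℚ) = 1 ∨ (γ : Matrix (Fin n) (Fin n) ℚ) = -1) := by
  have hunit : IsUnit ((-1 : ℚ[X]) ^ (n / 2)) := (isUnit_one.neg).pow _
  -- The coefficient of degree `n` of the resolvent is `± det A`.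
  have hdetA : A.det ≠ 0 := by
    intro h0
    have hc := Polynomial.coeff_det_X_add_C_card A (-B)
    rw [h0, Fintype.card_fin] at hc
    have hmat : (X : ℚ[X]) • A.map (fun a => C a) - B.map (fun a => C a)
        = (X : ℚ[X]) • A.map C + (-B).map C := by
      ext i j : 1
      simp [sub_eq_add_neg]
    rw [hmat] at hdeg hirr
    have hlead := leadingCoeff_ne_zero.2 hirr.ne_zero
    rw [leadingCoeff, hdeg] at hlead
    apply hlead
    have hC : (-1 : ℚ[X]) ^ (n / 2) = C ((-1) ^ (n / 2)) := by simp
    rw [hC, coeff_C_mul, hc, mul_zero]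
  have hA' : IsUnit A.det := isUnit_iff_ne_zero.2 hdetA
  obtain ⟨T, hT⟩ : ∃ T, A * T = B := ⟨A⁻¹ * B, Matrix.mul_nonsing_inv_cancel_left A B hA'⟩
  have hcancel : ∀ M N : Matrix (Fin n) (Fin n) ℚ, A * M = A * N → M = N := fun M N h => by
    rw [← Matrix.nonsing_inv_mul_cancel_left A M hA', h, Matrix.nonsing_inv_mul_cancel_left A N hA']
  have hchar : Irreducible T.charpoly := by
    have hfac : (X : ℚ[X]) • A.map (fun a => C a) - B.map (fun a => C a)
        = A.map (C : ℚ →+* ℚ[X]) * T.charmatrix := by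
      rw [← hT, Matrix.charmatrix, mul_sub, RingHom.mapMatrix_apply, ← Matrix.map_mul]
      congr 1
      rw [Matrix.scalar_apply, ← Matrix.smul_one_eq_diagonal, Matrix.mul_smul, mul_one]
    have hd : (A.map (C : ℚ →+* ℚ[X])).det = C A.det := (RingHom.map_det C A).symm
    rw [hfac, Matrix.det_mul, hd, irreducible_isUnit_mul hunit,
      irreducible_isUnit_mul (hA'.map C)] at hirr
    exact hirr
  have hself : Tᵀ * A = A * T := by
    have h := congrArg Matrix.transpose hT
    rwa [Matrix.transpose_mul, hA.eq, hB.eq, ← hT] at h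
  intro γ
  constructor
  · rintro ⟨h1, h2⟩
    obtain ⟨G, hGdet⟩ := γ
    change Gᵀ * A * G = A at h1
    change Gᵀ * B * G = B at h2
    change G = 1 ∨ G = -1
    have hcomm : Commute G T := by
      have hGu : IsUnit (Gᵀ).det := by simp [hGdet]
      -- `Gᵀ A (T G) = B = A T = Gᵀ A (G T)`
      have h3 : Gᵀ * (A * (T * G)) = Gᵀ * (A * (G * T)) := by
        calc Gᵀ * (A * (T * G)) = Gᵀ * (A * T) * G := by simp only [mul_assoc]
          _ = Gᵀ * A * G * T := by rw [hT, h2, h1, hT]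
          _ = Gᵀ * (A * (G * T)) := by simp only [mul_assoc]
      have h4 := congrArg ((Gᵀ)⁻¹ * ·) h3
      simp only [Matrix.nonsing_inv_mul_cancel_left _ _ hGu] at h4
      exact (hcancel _ _ h4).symm
    obtain ⟨p, rfl⟩ := exists_aeval_eq_of_commute hn hchar hcomm
    have hsq : aeval T p * aeval T p = 1 := by
      apply hcancel
      rw [← mul_assoc, ← transpose_aeval_mul hself p, h1, mul_one]
    rcases aeval_eq_zero_or_exists_left_inverse hchar (p - 1) with h | ⟨u, hu⟩
    · left
      simpa [sub_eq_zero] using h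
    · right
      have hprod : aeval T (p - 1) * (aeval T p + 1) = 0 := by
        simp only [map_sub, map_one, sub_mul, mul_add, hsq]
        simp
      have := congrArg (aeval T u * ·) hprod
      simp only [← mul_assoc, hu, one_mul, mul_zero] at this
      exact eq_neg_of_add_eq_zero_left this
  · rintro (h | h) <;> simp [h]
end
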